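/- arXiv:0902.1330 — 2 statements merged into one kernel-verified Lean document; each statement's English description precedes it below -/
import Mathlib

section
/- Let X be a Banach space and τ : D → D injective. If the scalar rearrangement operator is bounded on dyadic H¹ (‖T_{τ,1}‖₁ < ∞) and the vector-valued rearrangement operator is bounded on H²_X (‖T_{τ,2} ⊗ Id_X‖₂ < ∞), then for every 0 < p ≤ 2 the operator T_{τ,p} ⊗ Id_X is bounded on H^p_X, i.e. ‖T_{τ,p} ⊗ Id_X‖_p < ∞. -/
open MeasureTheory Set
open scoped ENNReal NNReal Classical

noncomputable section

/-- A dyadic subinterval of `[0,1)`: the half-open interval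
`[k/2^n, (k+1)/2^n)` with `k < 2^n`. -/
structure DyadicI where
  n : ℕ
  k : ℕ
  hk : k < 2 ^ n

instance : Nonempty DyadicI := ⟨⟨0, 0, by norm_num⟩⟩

namespace DyadicI

/-- The length `|I| = 2^{-n}` of a dyadic interval. -/
def len (I : DyadicI) : ℝ := (2 : ℝ) ^ (-(I.n : ℤ))

/-- The left endpoint `k 2^{-n}` of a dyadic interval. -/
def lep (I : DyadicI) : ℝ := (I.k : ℝ) * I.len

/-- The underlying point set `[k/2^n, (k+1)/2^n)` of a dyadic interval. -/
def toSet (I : DyadicI) : Set ℝ := Set.Ico I.lep (I.lep + I.len)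

/-- The `L^∞`-normalized Haar function `h_I`: `1` on the left half of `I`,
`-1` on the right half of `I`, `0` off `I`. -/
def haar (I : DyadicI) (t : ℝ) : ℝ :=
  if t ∈ Set.Ico I.lep (I.lep + I.len / 2) then 1
  else if t ∈ Set.Ico (I.lep + I.len / 2) (I.lep + I.len) then -1
  else 0

end DyadicI

open DyadicI

section Defs

variable {X : Type*} [NormedAddCommGroup X] [NormedSpace ℝ X]

/-- The square function `𝕊(f)` of the `X`-valued Haar expansion `f = ∑_{I ∈ s} x_I h_I`:
`𝕊(f)(t) = (E_ε ‖∑_I ε_I x_I h_I(t)‖²)^{1/2}`, the average being taken over all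
choices of signs `ε_I ∈ {±1}`, `I ∈ s`. -/
def sqFn (s : Finset DyadicI) (x : DyadicI → X) (t : ℝ) : ℝ :=
  Real.sqrt ((∑ ε : {I // I ∈ s} → Bool,
    ‖∑ I ∈ s.attach, ((if ε I then (1 : ℝ) else -1) * haar I.1 t) • x I.1‖ ^ 2) /
      2 ^ s.card)

/-- The `H^p_X` (quasi-)norm of `f = ∑_{I ∈ s} x_I h_I`:
`‖f‖ = (∫₀¹ 𝕊(f)(t)^p dt)^{1/p}`. -/
def HpNormV (p : ℝ) (s : Finset DyadicI) (x : DyadicI → X) : ℝ :=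
  (∫ t in Set.Icc (0 : ℝ) 1, sqFn s x t ^ p) ^ (1 / p)

/-- The coefficients of `(T_{τ,p} ⊗ Id_X)(f)` for `f = ∑_{I ∈ s} x_I h_I`, namely
`(T_{τ,p} ⊗ Id_X)(f) = ∑_{I ∈ s} (|I|/|τ(I)|)^{1/p} x_I h_{τ(I)}`, as a family of
coefficients indexed by the Haar support `τ(s)`. -/
def rearrCoef (τ : DyadicI → DyadicI) (p : ℝ) (s : Finset DyadicI) (x : DyadicI → X) :
    DyadicI → X :=
  fun J => ∑ I ∈ s, if τ I = J then ((len I / len (τ I)) ^ (1 / p)) • x I else 0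

/-- The scalar dyadic square function `S(f) = (∑_I a_I² 1_I)^{1/2}`
of `f = ∑_{I ∈ s} a_I h_I`. -/
def sqFnS (s : Finset DyadicI) (a : DyadicI → ℝ) (t : ℝ) : ℝ :=
  Real.sqrt (∑ I ∈ s, a I ^ 2 * Set.indicator (toSet I) (fun _ => (1 : ℝ)) t)

/-- The scalar dyadic `H^p` (quasi-)norm `‖f‖_{H^p} = ‖S(f)‖_{L^p[0,1]}`. -/
def HpNormS (p : ℝ) (s : Finset DyadicI) (a : DyadicI → ℝ) : ℝ :=
  (∫ t in Set.Icc (0 : ℝ) 1, sqFnS s a t ^ p) ^ (1 / p)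

/-- The coefficients of the scalar rearrangement operator `T_{τ,p}` applied to
`f = ∑_{I ∈ s} a_I h_I`; `T_{τ,p}` is determined by
`T_{τ,p}(h_I/|I|^{1/p}) = h_{τ(I)}/|τ(I)|^{1/p}`. -/
def rearrCoefS (τ : DyadicI → DyadicI) (p : ℝ) (s : Finset DyadicI) (a : DyadicI → ℝ) :
    DyadicI → ℝ :=
  fun J => ∑ I ∈ s, if τ I = J then ((len I / len (τ I)) ^ (1 / p)) * a I else 0

/-- The operator norm `‖T_{τ,p} ⊗ Id_X : H^p_X → H^p_X‖ ∈ [0,∞]`, computed as the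
supremum over finitely supported `f` in the unit ball of `H^p_X`. -/
def hpOpNorm (τ : DyadicI → DyadicI) (p : ℝ) (X : Type*) [NormedAddCommGroup X]
    [NormedSpace ℝ X] : ℝ≥0∞ :=
  ⨆ (s : Finset DyadicI) (x : DyadicI → X) (_ : HpNormV p s x ≤ 1),
    ENNReal.ofReal (HpNormV p (s.image τ) (rearrCoef τ p s x))

/-- The scalar operator norm `‖T_{τ,p} : H^p → H^p‖ ∈ [0,∞]`. -/
def hpOpNormS (τ : DyadicI → DyadicI) (p : ℝ) : ℝ≥0∞ :=
  ⨆ (s : Finset DyadicI) (a : DyadicI → ℝ) (_ : HpNormS p s a ≤ 1),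
    ENNReal.ofReal (HpNormS p (s.image τ) (rearrCoefS τ p s a))

/-- For `H = τ(L)` (so that `σ(J) = I` for `J = τ(I)`, `I ∈ L`), the maximal function
`μ_H(t) = sup_{J ∈ H} (|σ(J)|/|J|) 1_J(t) = sup_{I ∈ L} (|I|/|τ(I)|) 1_{τ(I)}(t)`,
as an `[0,∞]`-valued function. -/
def muSet (τ : DyadicI → DyadicI) (L : Set DyadicI) (t : ℝ) : ℝ≥0∞ :=
  ⨆ (I : DyadicI) (_ : I ∈ L),
    ENNReal.ofReal (len I / len (τ I) * Set.indicator (toSet (τ I)) (fun _ => (1 : ℝ)) t)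

/-- For `H = τ(L)` with `L` finite, the (real-valued) maximal function
`μ_H(t) = max_{I ∈ L} (|I|/|τ(I)|) 1_{τ(I)}(t)`. -/
def muFin (τ : DyadicI → DyadicI) (L : Finset DyadicI) (t : ℝ) : ℝ :=
  ((L.sup fun I =>
    Real.toNNReal (len I / len (τ I) * Set.indicator (toSet (τ I)) (fun _ => (1 : ℝ)) t) : ℝ≥0) : ℝ)

/-- The point set `L* = ⋃_{I ∈ L} I` covered by a collection of dyadic intervals. -/
def pointSet (L : Set DyadicI) : Set ℝ := ⋃ I ∈ L, toSet I

/-- The constant `C₁ = sup_{H ⊆ τ(D), H ≠ ∅} (1/|σ(H)*|) ∫₀¹ μ_H(t) dt`, where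
nonempty collections `H ⊆ τ(D)` are parametrized as `H = τ(L)` for nonempty `L ⊆ D`,
so that `σ(H)* = L*`. -/
def Cone (τ : DyadicI → DyadicI) : ℝ≥0∞ :=
  ⨆ (L : Set DyadicI) (_ : L.Nonempty),
    (∫⁻ t in Set.Icc (0 : ℝ) 1, muSet τ L t) / volume (pointSet L)

/-- The square of the dyadic BMO norm of `g = ∑_{J ∈ s} a_J h_J`:
`‖g‖_{BMO}² = sup_{I ∈ D} (1/|I|) ∑_{J ⊆ I} a_J² |J|`. -/
def bmoSq (s : Finset DyadicI) (a : DyadicI → ℝ) : ℝ≥0∞ :=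
  ⨆ I : DyadicI, ENNReal.ofReal
    ((∑ J ∈ s.filter fun J => toSet J ⊆ toSet I, a J ^ 2 * len J) / len I)

/-- The coefficients of `S_σ(g)` for `g = ∑_{J ∈ s} a_J h_J`, where `σ = τ⁻¹` on `τ(D)`:
`S_σ(h_J) = h_{σ(J)}` for `J ∈ τ(D)` and `S_σ(h_J) = 0` otherwise, so that the
coefficient of `h_K` in `S_σ(g)` is `a_{τ(K)}` if `τ(K) ∈ s`, and `0` otherwise. -/
def sSigmaCoef (τ : DyadicI → DyadicI) (s : Finset DyadicI) (a : DyadicI → ℝ) :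
    DyadicI → ℝ :=
  fun K => if τ K ∈ s then a (τ K) else 0

/-- The Haar support of `S_σ(g)` for `g` with Haar support `s`:
`σ(s ∩ τ(D))`, i.e. the preimage under `τ` of `s`. -/
def sSigmaSupp (τ : DyadicI → DyadicI) (s : Finset DyadicI) : Finset DyadicI :=
  (s.filter fun J => J ∈ Set.range τ).image (Function.invFun τ)

/-- The operator norm `‖S_σ‖_{BMO} ∈ [0,∞]` of `S_σ` with respect to the dyadic BMO
norm, computed over finitely supported Haar expansions. -/
def bmoOpNorm (τ : DyadicI → DyadicI) : ℝ≥0∞ :=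
  ⨆ (s : Finset DyadicI) (a : DyadicI → ℝ) (_ : bmoSq s a ≤ 1),
    (bmoSq (sSigmaSupp τ s) (sSigmaCoef τ s a)) ^ (1 / 2 : ℝ)

/-- The Carleson constant `⟦C⟧ = sup_{I ∈ C} (1/|I|) ∑_{J ∈ C, J ⊆ I} |J| ∈ [0,∞]`
of a collection of dyadic intervals. -/
def carleson (C : Set DyadicI) : ℝ≥0∞ :=
  ⨆ (I : DyadicI) (_ : I ∈ C),
    (∑' J : {J : DyadicI // J ∈ C ∧ toSet J ⊆ toSet I}, ENNReal.ofReal (len J.1)) /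
      ENNReal.ofReal (len I)

/-- The `L^p_X = L^p([0,1]; X)` (Bochner) norm of `f = ∑_{I ∈ s} x_I h_I`. -/
def LpNormV (p : ℝ) (s : Finset DyadicI) (x : DyadicI → X) : ℝ :=
  (∫ t in Set.Icc (0 : ℝ) 1, ‖∑ I ∈ s, haar I t • x I‖ ^ p) ^ (1 / p)

/-- The operator norm `‖T_{τ,p} ⊗ Id_X : L^p_X → L^p_X‖ ∈ [0,∞]`, computed over
finitely supported Haar expansions. -/
def lpOpNorm (τ : DyadicI → DyadicI) (p : ℝ) (X : Type*) [NormedAddCommGroup X]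
    [NormedSpace ℝ X] : ℝ≥0∞ :=
  ⨆ (s : Finset DyadicI) (x : DyadicI → X) (_ : LpNormV p s x ≤ 1),
    ENNReal.ofReal (LpNormV p (s.image τ) (rearrCoef τ p s x))

/-- The operator norm `‖T_{τ,p}^{-1} ⊗ Id_X‖ ∈ [0,∞]` on the span of
`{h_J : J ∈ τ(D)}` with the `L^p_X` norm: the map determined by
`x h_{τ(I)}/|τ(I)|^{1/p} ↦ x h_I/|I|^{1/p}`, i.e. sending
`g = ∑_{I ∈ L} x_I h_{τ(I)}` to `∑_{I ∈ L} (|τ(I)|/|I|)^{1/p} x_I h_I`. -/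
def lpInvOpNorm (τ : DyadicI → DyadicI) (p : ℝ) (X : Type*) [NormedAddCommGroup X]
    [NormedSpace ℝ X] : ℝ≥0∞ :=
  ⨆ (L : Finset DyadicI) (x : DyadicI → X)
    (_ : LpNormV p (L.image τ) (fun J => ∑ I ∈ L, if τ I = J then x I else 0) ≤ 1),
    ENNReal.ofReal (LpNormV p L fun I => ((len (τ I) / len I) ^ (1 / p)) • x I)

/-- The operator norm `‖T_{τ,1}^{-1}‖₁ ∈ [0,∞]` on the span of `{h_J : J ∈ τ(D)}`
with the dyadic `H¹` norm: the map determined by `h_{τ(I)}/|τ(I)| ↦ h_I/|I|`,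
i.e. sending `g = ∑_{I ∈ L} a_I h_{τ(I)}` to `∑_{I ∈ L} (|τ(I)|/|I|) a_I h_I`. -/
def h1InvOpNorm (τ : DyadicI → DyadicI) : ℝ≥0∞ :=
  ⨆ (L : Finset DyadicI) (a : DyadicI → ℝ)
    (_ : HpNormS 1 (L.image τ) (fun J => ∑ I ∈ L, if τ I = J then a I else 0) ≤ 1),
    ENNReal.ofReal (HpNormS 1 L fun I => (len (τ I) / len I) * a I)

/-- The Rademacher average `(E_ε ‖∑_{i<n} ε_i a_i‖^p)^{1/p}` over all choices of
signs `ε_i ∈ {±1}`. -/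
def radAvg (p : ℝ) {Y : Type*} [NormedAddCommGroup Y] [NormedSpace ℝ Y] (n : ℕ)
    (a : Fin n → Y) : ℝ :=
  ((∑ ε : Fin n → Bool, ‖∑ i, (if ε i then (1 : ℝ) else -1) • a i‖ ^ p) / 2 ^ n) ^ (1 / p)

/-- The type-`p` constant `Type_p(Y) ∈ [0,∞]`: the least `C` such that
`(E_ε ‖∑ ε_i a_i‖^p)^{1/p} ≤ C (∑ ‖a_i‖^p)^{1/p}` for all finite families in `Y`. -/
def typeConst (p : ℝ) (Y : Type*) [NormedAddCommGroup Y] [NormedSpace ℝ Y] : ℝ≥0∞ :=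
  sInf {C : ℝ≥0∞ | ∀ (n : ℕ) (a : Fin n → Y),
    ENNReal.ofReal (radAvg p n a) ≤ C * ENNReal.ofReal ((∑ i, ‖a i‖ ^ p) ^ (1 / p))}

/-- The UMD property of a Banach space `E`: for each `1 < r < ∞` the Haar system is
unconditional in `L^r_E`. -/
def IsUMD (E : Type*) [NormedAddCommGroup E] [NormedSpace ℝ E] : Prop :=
  ∀ r : ℝ, 1 < r → ∃ β : ℝ, ∀ (s : Finset DyadicI) (x : DyadicI → E) (ε : DyadicI → ℝ),
    (∀ I, ε I = 1 ∨ ε I = -1) →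
    LpNormV r s (fun I => ε I • x I) ≤ β * LpNormV r s x

/-- `B` is a block in `L` with top `I`: `B ⊆ L`, `I` is the unique maximal interval
of `B`, and `B` is order-convex in `L` between its elements and `I`. -/
def IsBlock (L : Set DyadicI) (B : Set DyadicI) (I : DyadicI) : Prop :=
  B ⊆ L ∧ I ∈ B ∧ (∀ J ∈ B, toSet J ⊆ toSet I) ∧
    ∀ J ∈ B, ∀ K ∈ L, toSet J ⊆ toSet K → toSet K ⊆ toSet I → K ∈ B

/-- `G₁(K | E)`: the maximal dyadic intervals of `E` strictly contained in `K`. -/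
def gen1 (K : DyadicI) (E : Set DyadicI) : Set DyadicI :=
  {J | J ∈ E ∧ toSet J ⊂ toSet K ∧
    ∀ J' ∈ E, toSet J' ⊂ toSet K → toSet J ⊆ toSet J' → J' = J}

end Defs

/-!
Fix `f = ∑ x_I h_I`. Let `S_I` be the value on `I` of the square function of the part of `f`
carried by intervals of length at least `|I|`, and let `w_I = |I| / |τ(I)|`. The coefficients
of `T_{τ,p} f` factor as
`w_I^{1/p} x_I = (w_I S_I^p)^{1/p - 1/2} · w_I^{1/2} S_I^{p/2 - 1} x_I`.

The second factor is the coefficient of `T_{τ,2} z`, where `z = ∑ S_I^{p/2 - 1} x_I h_I`. Abel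
summation over the scales gives `𝕊(z) ≤ (2/p) 𝕊(f)^{p/2}`, so the boundedness of `T_{τ,2}` on
`H²_X` controls `‖T_{τ,2} z‖₂²` by `‖f‖_p^p`.

The first factor is dominated by a power of the maximal function `M = max_I w_I S_I^p 1_{τ(I)}`.
Write `M` as an average of the `w_I S_I^p 1_{τ(I)}` with weights `e_I(t)`, and let `θ_I` be the mean
of `e_I` over `τ(I)`. Then `∫ M = ∑ S_I^p θ_I |I|` is the pairing of `T_{τ,1}(∑ S_I^p √θ_I h_I)`
with `∑ √θ_I h_{τ(I)}`. Since the weights add up to at most one, the latter function acts boundedly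
on `H¹`, while the Cauchy–Schwarz inequality yields
`‖∑ S_I^p √θ_I h_I‖_{H¹} ≤ (‖f‖_p^p ∫ M)^{1/2}`. Hence `∫ M ≤ C ‖f‖_p^p`, and Young's inequality
combines the two bounds.
-/

section RademacherAverages

variable {ι X : Type*} [Fintype ι] [NormedAddCommGroup X] [NormedSpace ℝ X]

/-- The seminorm `(E_ε ‖∑ i, ε i • y i‖²)^{1/2}` on finite families `y` in `X`. It is realized as
the pullback of the norm of an `ℓ²`-sum of copies of `X`, one for each choice of signs. -/
def rademacherSeminorm (ι X : Type*) [Fintype ι] [NormedAddCommGroup X] [NormedSpace ℝ X] :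
    Seminorm ℝ (ι → X) :=
  (normSeminorm ℝ (PiLp 2 fun _ : ι → Bool => X)).comp
    ((√(2 ^ Fintype.card ι))⁻¹ • ((WithLp.linearEquiv 2 ℝ ((ι → Bool) → X)).symm.toLinearMap ∘ₗ
      LinearMap.pi fun ε => ∑ i, (if ε i then (1 : ℝ) else -1) • LinearMap.proj i))

lemma rademacherSeminorm_apply (y : ι → X) :
    rademacherSeminorm ι X y =
      √((∑ ε : ι → Bool, ‖∑ i, (if ε i then (1 : ℝ) else -1) • y i‖ ^ 2) /
        2 ^ Fintype.card ι) := by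
  rw [Real.sqrt_div' _ (by positivity), div_eq_inv_mul]
  simp [rademacherSeminorm, norm_smul, PiLp.norm_eq_of_L2, LinearMap.sum_apply, -ite_smul,
    abs_of_nonneg (Real.sqrt_nonneg _)]

lemma rademacherSeminorm_sign_smul (η : ι → ℝ) (hη : ∀ i, η i = 1 ∨ η i = -1) (y : ι → X) :
    rademacherSeminorm ι X (fun i => η i • y i) = rademacherSeminorm ι X y := by
  let flipSigns : Equiv.Perm (ι → Bool) :=
    Function.Involutive.toPerm (fun ε i => if η i = 1 then ε i else !ε i) fun ε => by
      funext i; by_cases h : η i = 1 <;> simp [h]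
  rw [rademacherSeminorm_apply, rademacherSeminorm_apply]
  congr 2
  refine Fintype.sum_equiv flipSigns _ _ fun ε => ?_
  congr! 3 with i
  have flipSigns_apply : flipSigns ε i = if η i = 1 then ε i else !ε i := rfl
  rcases hη i with h | h <;> cases hε : ε i <;> norm_num [flipSigns_apply, h, hε]

lemma rademacherSeminorm_smul_le_of_abs_le_one (c : ι → ℝ) (hc : ∀ i, |c i| ≤ 1) (y : ι → X) :
    rademacherSeminorm ι X (fun i => c i • y i) ≤ rademacherSeminorm ι X y := by
  let diag : (ι → ℝ) →ₗ[ℝ] (ι → X) :=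
    LinearMap.pi fun i => (LinearMap.proj i : (ι → ℝ) →ₗ[ℝ] ℝ).smulRight (y i)
  have hcube : c ∈ convexHull ℝ (univ.pi fun _ : ι => ({-1, 1} : Set ℝ)) := by
    simp only [convexHull_pi, convexHull_pair, segment_eq_Icc (by norm_num : (-1 : ℝ) ≤ 1),
      mem_univ_pi, mem_Icc]
    exact fun i => abs_le.1 (hc i)
  obtain ⟨η, hη, hle⟩ := (((rademacherSeminorm ι X).comp diag).convexOn).exists_ge_of_mem_convexHull
    (subset_univ _) hcube
  refine hle.trans_eq (rademacherSeminorm_sign_smul η (fun i => ?_) y)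
  simpa [or_comm] using hη i (mem_univ i)

lemma rademacherSeminorm_le_mul {D : ℝ} (hD : 0 ≤ D) {u v : ι → X}
    (huv : ∀ i, ∃ c : ℝ, |c| ≤ D ∧ u i = c • v i) :
    rademacherSeminorm ι X u ≤ D * rademacherSeminorm ι X v := by
  choose c hc hu using huv
  have hDu : u = D • fun i => (c i / D) • v i := by
    funext i
    have hzero : D = 0 → c i = 0 := fun h => abs_nonpos_iff.1 (h ▸ hc i)
    rw [hu i, Pi.smul_apply, smul_smul, mul_div_cancel_of_imp' hzero]
  rw [hDu, map_smul_eq_mul, Real.norm_of_nonneg hD]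
  gcongr
  refine rademacherSeminorm_smul_le_of_abs_le_one _ (fun i => ?_) v
  rw [abs_div, abs_of_nonneg hD]
  exact div_le_one_of_le₀ (hc i) hD

lemma rademacherSeminorm_le_of_forall_smul {u v : ι → X}
    (huv : ∀ i, ∃ c : ℝ, |c| ≤ 1 ∧ u i = c • v i) :
    rademacherSeminorm ι X u ≤ rademacherSeminorm ι X v := by
  simpa using rademacherSeminorm_le_mul zero_le_one huv

lemma rademacherSeminorm_single (j : ι) (v : X) :
    rademacherSeminorm ι X (Pi.single j v) = ‖v‖ := by
  have hsum (ε : ι → Bool) :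
      ‖∑ i, (if ε i then (1 : ℝ) else -1) • (Pi.single j v : ι → X) i‖ = ‖v‖ := by
    rw [Fintype.sum_eq_single j fun i hi => by simp [hi]]
    cases ε j <;> simp
  simp only [rademacherSeminorm_apply, hsum]
  simp

lemma norm_le_rademacherSeminorm (y : ι → X) (j : ι) : ‖y j‖ ≤ rademacherSeminorm ι X y := by
  rw [← rademacherSeminorm_single j (y j)]
  refine rademacherSeminorm_le_of_forall_smul fun i => ?_
  by_cases h : i = j
  · subst h; exact ⟨1, by simp, by simp⟩
  · exact ⟨0, by simp, by simp [h]⟩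

lemma sum_sign_mul_sign (i j : ι) :
    ∑ ε : ι → Bool, (if ε i then (1 : ℝ) else -1) * (if ε j then (1 : ℝ) else -1) =
      if i = j then 2 ^ Fintype.card ι else 0 := by
  split_ifs with h
  · have hsq (b : Bool) : (if b then (1 : ℝ) else -1) * (if b then (1 : ℝ) else -1) = 1 := by
      cases b <;> norm_num
    simp [h, hsq]
  · let flipSigns : Equiv.Perm (ι → Bool) :=
      Function.Involutive.toPerm (fun ε => Function.update ε i (!ε i)) fun ε => by simp
    rw [← self_eq_neg, ← Finset.sum_neg_distrib]
    refine Fintype.sum_equiv flipSigns _ _ fun ε => ?_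
    have flipSigns_apply : flipSigns ε = Function.update ε i (!ε i) := rfl
    cases hi : ε i <;> cases hj : ε j <;>
      simp [flipSigns_apply, hi, hj, Function.update_of_ne (Ne.symm h)]

lemma rademacherSeminorm_eq_sqrt_sum_norm_sq {H : Type*} [NormedAddCommGroup H]
    [InnerProductSpace ℝ H] (y : ι → H) :
    rademacherSeminorm ι H y = √(∑ i, ‖y i‖ ^ 2) := by
  have hsum : ∑ ε : ι → Bool, ‖∑ i, (if ε i then (1 : ℝ) else -1) • y i‖ ^ 2 =
      2 ^ Fintype.card ι * ∑ i, ‖y i‖ ^ 2 := by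
    simp only [← real_inner_self_eq_norm_sq, sum_inner, inner_sum, real_inner_smul_left,
      real_inner_smul_right, ← mul_assoc]
    rw [Finset.sum_comm, Finset.mul_sum]
    refine Finset.sum_congr rfl fun i _ => ?_
    rw [Finset.sum_comm]
    simp only [← Finset.sum_mul, sum_sign_mul_sign]
    simp
  rw [rademacherSeminorm_apply, hsum, mul_div_cancel_left₀ _ (by positivity)]

end RademacherAverages

section DyadicIntervals

variable {I J K : DyadicI} {t u : ℝ}

lemma DyadicI.len_pos (I : DyadicI) : 0 < len I := by
  unfold len; positivity

lemma DyadicI.mem_toSet_iff_floor_eq : t ∈ toSet I ↔ ⌊t * 2 ^ I.n⌋ = I.k := by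
  have hpow : (0 : ℝ) < 2 ^ I.n := by positivity
  have hlen : len I = (2 ^ I.n : ℝ)⁻¹ := by rw [len, zpow_neg, zpow_natCast]
  rw [Int.floor_eq_iff, toSet, mem_Ico, lep, ← add_one_mul, hlen, ← div_eq_mul_inv,
    ← div_eq_mul_inv, div_le_iff₀ hpow, lt_div_iff₀ hpow]
  norm_cast

lemma floor_mul_two_pow_of_le {m n : ℕ} (h : m ≤ n) (t : ℝ) :
    ⌊t * 2 ^ m⌋ = ⌊t * 2 ^ n⌋ / 2 ^ (n - m) := by
  have hscale : t * 2 ^ m = t * 2 ^ n / (2 ^ (n - m) : ℕ) := by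
    rw [eq_div_iff (by positivity), Nat.cast_pow, Nat.cast_two, mul_assoc, ← pow_add,
      Nat.add_sub_cancel' h]
  rw [hscale, Int.floor_div_natCast]
  norm_cast

lemma DyadicI.mem_toSet_iff_of_le (h : K.n ≤ J.n) (ht : t ∈ toSet J) (hu : u ∈ toSet J) :
    t ∈ toSet K ↔ u ∈ toSet K := by
  rw [mem_toSet_iff_floor_eq] at ht hu
  rw [mem_toSet_iff_floor_eq, mem_toSet_iff_floor_eq, floor_mul_two_pow_of_le h t,
    floor_mul_two_pow_of_le h u, ht, hu]

lemma DyadicI.lep_mem_toSet (I : DyadicI) : lep I ∈ toSet I :=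
  ⟨le_rfl, lt_add_of_pos_right _ I.len_pos⟩

lemma DyadicI.toSet_subset_Icc (I : DyadicI) : toSet I ⊆ Icc 0 1 := by
  have hlen : (0 : ℝ) ≤ len I := I.len_pos.le
  have hright : lep I + len I ≤ 1 := by
    have hk : (I.k : ℝ) + 1 ≤ 2 ^ I.n := by exact_mod_cast I.hk
    calc lep I + len I = (I.k + 1) * len I := by rw [lep, add_one_mul]
      _ ≤ 2 ^ I.n * len I := by gcongr
      _ = 1 := by rw [len, zpow_neg, zpow_natCast, mul_inv_cancel₀ (by positivity)]
  exact fun t ht => ⟨(mul_nonneg I.k.cast_nonneg hlen).trans ht.1, ht.2.le.trans hright⟩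

/-- The characteristic function `1_I` of a dyadic interval. -/
abbrev DyadicI.ind (I : DyadicI) (t : ℝ) : ℝ := (toSet I).indicator (fun _ => (1 : ℝ)) t

lemma DyadicI.ind_nonneg (I : DyadicI) (t : ℝ) : 0 ≤ I.ind t :=
  indicator_nonneg (fun _ _ => zero_le_one) t

lemma DyadicI.ind_le_one (I : DyadicI) (t : ℝ) : I.ind t ≤ 1 :=
  indicator_apply_le' (fun _ => le_rfl) fun _ => zero_le_one

lemma DyadicI.measurableSet_toSet (I : DyadicI) : MeasurableSet (toSet I) := measurableSet_Ico

lemma DyadicI.measurable_ind (I : DyadicI) : Measurable I.ind :=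
  measurable_const.indicator I.measurableSet_toSet

lemma DyadicI.integrableOn_ind (I : DyadicI) : IntegrableOn I.ind (Icc 0 1) :=
  (integrableOn_const (by simp)).indicator I.measurableSet_toSet

lemma DyadicI.integral_ind (I : DyadicI) : ∫ t in Icc (0 : ℝ) 1, I.ind t = len I := by
  rw [setIntegral_indicator I.measurableSet_toSet, inter_eq_right.2 I.toSet_subset_Icc]
  simp [toSet, I.len_pos.le]

lemma DyadicI.abs_haar (I : DyadicI) (t : ℝ) : |haar I t| = I.ind t := by
  have hlen := I.len_pos
  simp only [haar, indicator_apply, toSet, mem_Ico]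
  split_ifs <;> grind

lemma DyadicI.measurable_haar (I : DyadicI) : Measurable (haar I) :=
  .ite measurableSet_Ico measurable_const (.ite measurableSet_Ico measurable_const measurable_const)

lemma DyadicI.haar_eq_zero (h : t ∉ toSet I) : haar I t = 0 := by
  simpa [h] using abs_haar I t

end DyadicIntervals

section SquareFunctions

variable {X : Type*} [NormedAddCommGroup X] [NormedSpace ℝ X]

lemma sqFn_eq_rademacherSeminorm (s : Finset DyadicI) (x : DyadicI → X) (t : ℝ) :
    sqFn s x t = rademacherSeminorm s X fun I => haar I t • x I := by
  simp only [sqFn, rademacherSeminorm_apply, mul_smul, Finset.univ_eq_attach, Fintype.card_coe]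
  congr!

lemma sqFn_nonneg (s : Finset DyadicI) (x : DyadicI → X) (t : ℝ) : 0 ≤ sqFn s x t :=
  Real.sqrt_nonneg _

lemma sqFn_smul (s : Finset DyadicI) (r : ℝ) (x : DyadicI → X) (t : ℝ) :
    sqFn s (r • x) t = |r| * sqFn s x t := by
  simp only [sqFn_eq_rademacherSeminorm, Pi.smul_apply, smul_comm _ r]
  exact map_smul_eq_mul _ r _

lemma sqFn_le_mul_of_forall_smul {s : Finset DyadicI} {u v : DyadicI → X} {t D : ℝ} (hD : 0 ≤ D)
    (huv : ∀ I ∈ s, t ∈ toSet I → ∃ c : ℝ, |c| ≤ D ∧ u I = c • v I) :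
    sqFn s u t ≤ D * sqFn s v t := by
  rw [sqFn_eq_rademacherSeminorm, sqFn_eq_rademacherSeminorm]
  refine rademacherSeminorm_le_mul hD fun I => ?_
  by_cases ht : t ∈ toSet I.1
  · obtain ⟨c, hc, hu⟩ := huv I I.2 ht
    exact ⟨c, hc, by rw [hu, smul_comm]⟩
  · exact ⟨0, by simpa using hD, by simp [haar_eq_zero ht]⟩

lemma sqFn_congr_of_mem_iff {s : Finset DyadicI} {x : DyadicI → X} {t u : ℝ}
    (h : ∀ I ∈ s, x I ≠ 0 → (t ∈ toSet I ↔ u ∈ toSet I)) : sqFn s x t = sqFn s x u := by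
  wlog hle : sqFn s x u ≤ sqFn s x t generalizing t u
  · exact (this (fun I hI hx => (h I hI hx).symm) (le_of_not_ge hle)).symm
  refine le_antisymm ?_ hle
  rw [sqFn_eq_rademacherSeminorm, sqFn_eq_rademacherSeminorm]
  refine rademacherSeminorm_le_of_forall_smul fun I => ⟨haar I t * haar I u, ?_, ?_⟩
  · rw [abs_mul, abs_haar, abs_haar]
    exact mul_le_one₀ (ind_le_one _ _) (ind_nonneg _ _) (ind_le_one _ _)
  · by_cases hx : x I = 0
    · simp [hx]
    by_cases hu : u ∈ toSet I.1
    · rw [smul_smul, mul_assoc, ← sq, ← sq_abs (haar _ u), abs_haar]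
      simp [hu]
    · simp [haar_eq_zero hu, haar_eq_zero (mt (h I I.2 hx).1 hu)]

lemma sqFn_eq_sqrt_sum_norm_sq {H : Type*} [NormedAddCommGroup H] [InnerProductSpace ℝ H]
    (s : Finset DyadicI) (x : DyadicI → H) (t : ℝ) :
    sqFn s x t = √(∑ I ∈ s, ‖x I‖ ^ 2 * I.ind t) := by
  rw [sqFn_eq_rademacherSeminorm, rademacherSeminorm_eq_sqrt_sum_norm_sq, ← Finset.sum_coe_sort s]
  congr! 2 with I
  rw [norm_smul, Real.norm_eq_abs, abs_haar, mul_pow, mul_comm]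
  by_cases ht : t ∈ toSet I.1 <;> simp [ht]

lemma measurable_sqFn (s : Finset DyadicI) (x : DyadicI → X) : Measurable (sqFn s x) := by
  refine Measurable.sqrt (.div_const (Finset.measurable_fun_sum _ fun ε _ => ?_) _)
  refine (Finset.stronglyMeasurable_fun_sum _ fun I _ => ?_).norm.measurable.pow_const 2
  exact ((I.1.measurable_haar.const_mul _).stronglyMeasurable).smul_const _

lemma sqFn_le_rademacherSeminorm (s : Finset DyadicI) (x : DyadicI → X) (t : ℝ) :
    sqFn s x t ≤ rademacherSeminorm s X fun I => x I := by
  rw [sqFn_eq_rademacherSeminorm]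
  refine rademacherSeminorm_smul_le_of_abs_le_one (fun I : s => haar I t) (fun I => ?_) _
  rw [abs_haar]
  exact ind_le_one _ _

lemma integrableOn_sqFn_rpow (s : Finset DyadicI) (x : DyadicI → X) {p : ℝ} (hp : 0 ≤ p) :
    IntegrableOn (fun t => sqFn s x t ^ p) (Icc 0 1) := by
  refine Integrable.of_bound ((measurable_sqFn s x).pow_const p).aestronglyMeasurable
    (rademacherSeminorm s X (fun I => x I) ^ p) (.of_forall fun t => ?_)
  rw [Real.norm_of_nonneg (Real.rpow_nonneg (sqFn_nonneg s x t) p)]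
  exact Real.rpow_le_rpow (sqFn_nonneg s x t) (sqFn_le_rademacherSeminorm s x t) hp

lemma integral_sqFn_rpow_nonneg (s : Finset DyadicI) (x : DyadicI → X) (p : ℝ) :
    0 ≤ ∫ t in Icc (0 : ℝ) 1, sqFn s x t ^ p :=
  integral_nonneg fun t => Real.rpow_nonneg (sqFn_nonneg s x t) p

lemma HpNormV_nonneg (p : ℝ) (s : Finset DyadicI) (x : DyadicI → X) : 0 ≤ HpNormV p s x :=
  Real.rpow_nonneg (integral_sqFn_rpow_nonneg s x p) _

lemma HpNormV_rpow {p : ℝ} (hp : p ≠ 0) (s : Finset DyadicI) (x : DyadicI → X) :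
    HpNormV p s x ^ p = ∫ t in Icc (0 : ℝ) 1, sqFn s x t ^ p := by
  rw [HpNormV, one_div, Real.rpow_inv_rpow (integral_sqFn_rpow_nonneg s x p) hp]

lemma HpNormV_one (s : Finset DyadicI) (x : DyadicI → X) :
    HpNormV 1 s x = ∫ t in Icc (0 : ℝ) 1, sqFn s x t := by
  simp [HpNormV]

lemma HpNormV_smul {p : ℝ} (hp : p ≠ 0) (s : Finset DyadicI) (r : ℝ) (x : DyadicI → X) :
    HpNormV p s (r • x) = |r| * HpNormV p s x := by
  simp only [HpNormV, sqFn_smul, Real.mul_rpow (abs_nonneg r) (sqFn_nonneg s x _),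
    integral_const_mul]
  rw [Real.mul_rpow (Real.rpow_nonneg (abs_nonneg r) p) (integral_sqFn_rpow_nonneg s x p), one_div,
    Real.rpow_rpow_inv (abs_nonneg r) hp]

end SquareFunctions

section OperatorNorms

lemma le_mul_of_forall_le_one {E : Type*} [SMul ℝ E] {N M : E → ℝ} {K : ℝ}
    (hN_nonneg : ∀ x, 0 ≤ N x) (hN : ∀ r : ℝ, 0 ≤ r → ∀ x, N (r • x) = r * N x)
    (hM : ∀ r : ℝ, 0 ≤ r → ∀ x, M (r • x) = r * M x) (hNM : ∀ x, N x ≤ 1 → M x ≤ K) (x : E) :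
    M x ≤ K * N x := by
  refine ge_of_tendsto ((continuous_const_mul K).continuousWithinAt (s := Ioi (N x)))
    (eventually_nhdsWithin_of_forall fun b (hb : N x < b) => ?_)
  have hb0 : 0 < b := (hN_nonneg x).trans_lt hb
  have hball : N (b⁻¹ • x) ≤ 1 := by
    rw [hN _ (inv_nonneg.2 hb0.le), inv_mul_le_one₀ hb0]
    exact hb.le
  have hscaled := hNM _ hball
  rwa [hM _ (inv_nonneg.2 hb0.le), inv_mul_le_iff₀ hb0, mul_comm] at hscaled

variable {X : Type*} [NormedAddCommGroup X] [NormedSpace ℝ X] {τ : DyadicI → DyadicI} {p : ℝ}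

lemma rearrCoef_smul (τ : DyadicI → DyadicI) (p : ℝ) (s : Finset DyadicI) (r : ℝ)
    (x : DyadicI → X) : rearrCoef τ p s (r • x) = r • rearrCoef τ p s x := by
  funext J
  simp only [rearrCoef, Pi.smul_apply, Finset.smul_sum, smul_ite, smul_zero, smul_comm r]

lemma rearrCoef_apply (hτ : Function.Injective τ) {s : Finset DyadicI} (x : DyadicI → X)
    {I : DyadicI} (hI : I ∈ s) :
    rearrCoef τ p s x (τ I) = (len I / len (τ I)) ^ (1 / p) • x I := by
  simp only [rearrCoef, hτ.eq_iff, Finset.sum_ite_eq', if_pos hI]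

lemma HpNormV_rearrCoef_le (hp : p ≠ 0) (h : hpOpNorm τ p X < ⊤) (s : Finset DyadicI)
    (x : DyadicI → X) :
    HpNormV p (s.image τ) (rearrCoef τ p s x) ≤ (hpOpNorm τ p X).toReal * HpNormV p s x := by
  refine le_mul_of_forall_le_one (M := fun x => HpNormV p (s.image τ) (rearrCoef τ p s x))
    (HpNormV_nonneg p s) (fun r hr x => ?_) (fun r hr x => ?_) (fun x hx => ?_) x
  · rw [HpNormV_smul hp, abs_of_nonneg hr]
  · rw [rearrCoef_smul, HpNormV_smul hp, abs_of_nonneg hr]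
  · refine (ENNReal.ofReal_le_iff_le_toReal h.ne).1 ?_
    exact le_iSup_of_le s (le_iSup_of_le x (le_iSup_of_le hx le_rfl))

lemma hpOpNorm_lt_top_of_integral_le (hp : 0 < p) {B : ℝ}
    (h : ∀ (s : Finset DyadicI) (x : DyadicI → X),
      ∫ t in Icc (0 : ℝ) 1, sqFn (s.image τ) (rearrCoef τ p s x) t ^ p ≤
        B * ∫ t in Icc (0 : ℝ) 1, sqFn s x t ^ p) :
    hpOpNorm τ p X < ⊤ := by
  refine lt_of_le_of_lt (b := ENNReal.ofReal (|B| ^ (1 / p))) ?_ ENNReal.ofReal_lt_top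
  refine iSup₂_le fun s x => iSup_le fun hx => ENNReal.ofReal_le_ofReal ?_
  refine Real.rpow_le_rpow (integral_sqFn_rpow_nonneg _ _ _) ((h s x).trans ?_) (by positivity)
  have hunit : ∫ t in Icc (0 : ℝ) 1, sqFn s x t ^ p ≤ 1 := by
    rw [← HpNormV_rpow hp.ne']
    exact Real.rpow_le_one (HpNormV_nonneg p s x) hx hp.le
  calc B * ∫ t in Icc (0 : ℝ) 1, sqFn s x t ^ p
      ≤ |B| * ∫ t in Icc (0 : ℝ) 1, sqFn s x t ^ p := by
        gcongr
        · exact integral_sqFn_rpow_nonneg s x p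
        · exact le_abs_self B
    _ ≤ |B| := mul_le_of_le_one_right (abs_nonneg B) hunit

lemma sqFnS_eq_sqFn : sqFnS = sqFn (X := ℝ) := by
  funext s a t
  simp only [sqFnS, sqFn_eq_sqrt_sum_norm_sq, Real.norm_eq_abs, sq_abs]

lemma hpOpNormS_eq_hpOpNorm (τ : DyadicI → DyadicI) (p : ℝ) : hpOpNormS τ p = hpOpNorm τ p ℝ := by
  simp only [hpOpNormS, hpOpNorm, HpNormS, HpNormV, sqFnS_eq_sqFn]
  rfl

end OperatorNorms

section Truncation

/-- The coefficients of the partial sum of the Haar expansion `∑ I, x I h_I` over the intervals of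
generation less than `n`. -/
def truncCoef {X : Type*} [Zero X] (n : ℕ) (x : DyadicI → X) (I : DyadicI) : X :=
  if I.n < n then x I else 0

lemma exists_truncCoef_eq {X : Type*} [Zero X] (s : Finset DyadicI) (x : DyadicI → X) :
    ∃ n, ∀ I ∈ s, truncCoef n x I = x I :=
  ⟨s.sup DyadicI.n + 1, fun _ hI => if_pos (Nat.lt_succ_of_le (Finset.le_sup hI))⟩

lemma sum_range_smul_truncCoef_sub {X : Type*} [AddCommGroup X] [Module ℝ X] (w : ℕ → ℝ)
    (x : DyadicI → X) (n : ℕ) (I : DyadicI) :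
    ∑ k ∈ Finset.range n, w (k + 1) • (truncCoef (k + 1) x I - truncCoef k x I) =
      w (I.n + 1) • truncCoef n x I := by
  induction n with
  | zero => simp [truncCoef]
  | succ n ih =>
    rw [Finset.sum_range_succ, ih]
    rcases lt_trichotomy I.n n with h | rfl | h
    · simp [truncCoef, h, h.trans n.lt_succ_self]
    · simp [truncCoef]
    · simp [truncCoef, h.not_gt, (Nat.succ_le_of_lt h).not_gt]

end Truncation

section LocalSquareFunction

variable {X : Type*} [NormedAddCommGroup X] [NormedSpace ℝ X] {s : Finset DyadicI}
  {x : DyadicI → X} {I : DyadicI} {t : ℝ}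

/-- The square function of the partial sum of `∑ I ∈ s, x I h_I` up to and including the generation
of `I`. It is constant on `I`, hence recorded as its value at the left endpoint. -/
def localSqFn (s : Finset DyadicI) (x : DyadicI → X) (I : DyadicI) : ℝ :=
  sqFn s (truncCoef (I.n + 1) x) (lep I)

lemma norm_le_sqFn (hI : I ∈ s) (ht : t ∈ toSet I) : ‖x I‖ ≤ sqFn s x t := by
  rw [sqFn_eq_rademacherSeminorm]
  simpa [norm_smul, abs_haar, ht] using
    norm_le_rademacherSeminorm (fun I : s => haar I t • x I) ⟨I, hI⟩

lemma sqFn_truncCoef_mono (s : Finset DyadicI) (x : DyadicI → X) (t : ℝ) :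
    Monotone fun n => sqFn s (truncCoef n x) t := by
  intro m n hmn
  refine (sqFn_le_mul_of_forall_smul zero_le_one fun I _ _ => ?_).trans_eq (one_mul _)
  by_cases hI : I.n < m
  · exact ⟨1, by simp, by simp [truncCoef, hI, hI.trans_le hmn]⟩
  · exact ⟨0, by simp, by simp [truncCoef, hI]⟩

lemma sqFn_truncCoef_le (n : ℕ) : sqFn s (truncCoef n x) t ≤ sqFn s x t := by
  refine (sqFn_le_mul_of_forall_smul zero_le_one fun I _ _ => ?_).trans_eq (one_mul _)
  exact ⟨if I.n < n then 1 else 0, by split_ifs <;> simp, by simp [truncCoef]⟩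

lemma localSqFn_eq_sqFn (ht : t ∈ toSet I) :
    localSqFn s x I = sqFn s (truncCoef (I.n + 1) x) t := by
  refine sqFn_congr_of_mem_iff fun J _ hJ => mem_toSet_iff_of_le ?_ I.lep_mem_toSet ht
  exact Nat.le_of_lt_succ (of_not_not fun h => hJ (if_neg h))

lemma localSqFn_nonneg (s : Finset DyadicI) (x : DyadicI → X) (I : DyadicI) :
    0 ≤ localSqFn s x I :=
  sqFn_nonneg _ _ _

lemma localSqFn_le_sqFn (ht : t ∈ toSet I) : localSqFn s x I ≤ sqFn s x t :=
  (localSqFn_eq_sqFn ht).trans_le (sqFn_truncCoef_le _)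

lemma norm_le_localSqFn (hI : I ∈ s) : ‖x I‖ ≤ localSqFn s x I := by
  have h := norm_le_sqFn (x := truncCoef (I.n + 1) x) hI I.lep_mem_toSet
  rwa [truncCoef, if_pos I.n.lt_succ_self] at h

end LocalSquareFunction

section AbelSummation

lemma rpow_sub_one_mul_self {S q : ℝ} (hS : 0 ≤ S) (hq : q ≠ 0) : S ^ (q - 1) * S = S ^ q := by
  rw [← Real.rpow_add_one' hS (by simpa using hq), sub_add_cancel]

lemma rpow_le_mul_rpow_sub_one_mul_add {q S R : ℝ} (hq : 0 ≤ q) (hq1 : q ≤ 1) (hS : 0 ≤ S)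
    (hR : 0 < R) : S ^ q ≤ q * (R ^ (q - 1) * S) + (1 - q) * R ^ q := by
  have hamgm := Real.geom_mean_le_arith_mean2_weighted hq (sub_nonneg.2 hq1)
    (p₁ := R ^ (q - 1) * S) (p₂ := R ^ q) (by positivity) (by positivity) (by ring)
  have hcancel : (R ^ (q - 1) * S) ^ q * (R ^ q) ^ (1 - q) = S ^ q := by
    rw [Real.mul_rpow (by positivity) hS, ← Real.rpow_mul hR.le, ← Real.rpow_mul hR.le,
      mul_right_comm, ← Real.rpow_add hR, show (q - 1) * q + q * (1 - q) = 0 by ring,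
      Real.rpow_zero, one_mul]
  rwa [hcancel] at hamgm

lemma abs_rpow_sub_rpow_mul_le {q S R : ℝ} (hq : 0 < q) (hq1 : q ≤ 1) (hS : 0 ≤ S) (hSR : S ≤ R) :
    |S ^ (q - 1) - R ^ (q - 1)| * S ≤ (q⁻¹ - 1) * (R ^ q - S ^ q) := by
  rcases hS.eq_or_lt with rfl | hpos
  · rw [mul_zero, Real.zero_rpow hq.ne', sub_zero]
    exact mul_nonneg (sub_nonneg.2 (one_le_inv₀ hq |>.2 hq1)) (Real.rpow_nonneg hSR q)
  · have hanti : R ^ (q - 1) ≤ S ^ (q - 1) :=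
      Real.rpow_le_rpow_of_nonpos hpos hSR (sub_nonpos.2 hq1)
    have hamgm := rpow_le_mul_rpow_sub_one_mul_add hq.le hq1 hS (hpos.trans_le hSR)
    rw [abs_of_nonneg (sub_nonneg.2 hanti), sub_mul, rpow_sub_one_mul_self hS hq.ne']
    refine le_of_mul_le_mul_left ?_ hq
    calc q * (S ^ q - R ^ (q - 1) * S) ≤ (1 - q) * (R ^ q - S ^ q) := by linarith
      _ = q * ((q⁻¹ - 1) * (R ^ q - S ^ q)) := by field_simp

lemma seminorm_sum_rpow_smul_sub_le {V : Type*} [AddCommGroup V] [Module ℝ V] (N : Seminorm ℝ V)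
    {Y : ℕ → V} (hY0 : Y 0 = 0) (hY : Monotone fun n => N (Y n)) {q : ℝ} (hq : 0 < q)
    (hq1 : q ≤ 1) (n : ℕ) :
    N (∑ k ∈ Finset.range n, N (Y (k + 1)) ^ (q - 1) • (Y (k + 1) - Y k)) ≤
      q⁻¹ * N (Y n) ^ q := by
  set Z : ℕ → V := fun n => ∑ k ∈ Finset.range n, N (Y (k + 1)) ^ (q - 1) • (Y (k + 1) - Y k)
  have hcorrected (n : ℕ) : N (Z n - N (Y n) ^ (q - 1) • Y n) ≤ (q⁻¹ - 1) * N (Y n) ^ q := by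
    induction n with
    | zero => simp [Z, hY0, Real.zero_rpow hq.ne']
    | succ n ih =>
      have hstep : Z (n + 1) - N (Y (n + 1)) ^ (q - 1) • Y (n + 1) =
          (Z n - N (Y n) ^ (q - 1) • Y n) +
            (N (Y n) ^ (q - 1) - N (Y (n + 1)) ^ (q - 1)) • Y n := by
        simp only [Z, Finset.sum_range_succ]
        module
      have hweight := abs_rpow_sub_rpow_mul_le hq hq1 (apply_nonneg N (Y n)) (hY n.le_succ)
      calc N (Z (n + 1) - N (Y (n + 1)) ^ (q - 1) • Y (n + 1))
          ≤ N (Z n - N (Y n) ^ (q - 1) • Y n) +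
              |N (Y n) ^ (q - 1) - N (Y (n + 1)) ^ (q - 1)| * N (Y n) := by
            rw [hstep, ← Real.norm_eq_abs, ← map_smul_eq_mul]
            exact map_add_le_add N _ _
        _ ≤ (q⁻¹ - 1) * N (Y (n + 1)) ^ q := by linarith
  have hboundary : N (N (Y n) ^ (q - 1) • Y n) = N (Y n) ^ q := by
    rw [map_smul_eq_mul, Real.norm_of_nonneg (Real.rpow_nonneg (apply_nonneg N _) _),
      rpow_sub_one_mul_self (apply_nonneg N _) hq.ne']
  calc N (Z n) = N (Z n - N (Y n) ^ (q - 1) • Y n + N (Y n) ^ (q - 1) • Y n) := by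
        rw [sub_add_cancel]
    _ ≤ (q⁻¹ - 1) * N (Y n) ^ q + N (Y n) ^ q :=
        (map_add_le_add N _ _).trans (add_le_add (hcorrected n) hboundary.le)
    _ = q⁻¹ * N (Y n) ^ q := by ring

variable {X : Type*} [NormedAddCommGroup X] [NormedSpace ℝ X]

/-- The Haar coefficients `𝕊(f)_I ^ (q - 1) x_I`, where `𝕊(f)_I` is the local square function of
`f = ∑ x_I h_I`. They stand in for the `q`-th power of `f`: the square function of the new expansion
is at most `q⁻¹ 𝕊(f) ^ q`. -/
def rpowCoef (q : ℝ) (s : Finset DyadicI) (x : DyadicI → X) (I : DyadicI) : X :=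
  localSqFn s x I ^ (q - 1) • x I

lemma sqFn_rpowCoef_le {q : ℝ} (hq : 0 < q) (hq1 : q ≤ 1) (s : Finset DyadicI)
    (x : DyadicI → X) (t : ℝ) :
    sqFn s (rpowCoef q s x) t ≤ q⁻¹ * sqFn s x t ^ q := by
  let Y : ℕ → s → X := fun n I => haar I t • truncCoef n x I
  have hYnorm (n : ℕ) : rademacherSeminorm s X (Y n) = sqFn s (truncCoef n x) t :=
    (sqFn_eq_rademacherSeminorm s _ t).symm
  obtain ⟨n, hn⟩ := exists_truncCoef_eq s x
  have hYn : sqFn s (truncCoef n x) t = sqFn s x t := by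
    simp only [sqFn_eq_rademacherSeminorm]
    congr! 3 with I
    exact hn I I.2
  have habel := seminorm_sum_rpow_smul_sub_le (rademacherSeminorm s X) (Y := Y)
    (by funext I; simp [Y, truncCoef]) (by simpa only [hYnorm] using sqFn_truncCoef_mono s x t)
    hq hq1 n
  rw [hYnorm, hYn] at habel
  refine le_of_eq_of_le ?_ habel
  rw [sqFn_eq_rademacherSeminorm]
  congr 1
  funext I
  have hsum := sum_range_smul_truncCoef_sub
    (fun k => sqFn s (truncCoef k x) t ^ (q - 1)) x n I
  rw [hn I I.2] at hsum
  simp only [Finset.sum_apply, Pi.smul_apply, Pi.sub_apply, hYnorm, Y, ← smul_sub]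
  simp only [smul_comm _ (haar I.1 t), ← Finset.smul_sum, hsum]
  by_cases ht : t ∈ toSet I.1
  · rw [rpowCoef, localSqFn_eq_sqFn ht]
  · simp only [haar_eq_zero ht, zero_smul]

end AbelSummation

section FeffermanInequality

lemma div_sqrt_add_le_two_mul_sqrt_sub_sqrt {a b : ℝ} (ha : 0 ≤ a) (hb : 0 ≤ b) :
    a / √(a + b) ≤ 2 * (√(a + b) - √b) := by
  refine div_le_of_le_mul₀ (Real.sqrt_nonneg _) ?_ ?_
  · exact mul_nonneg zero_le_two (sub_nonneg.2 (Real.sqrt_le_sqrt (le_add_of_nonneg_left ha)))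
  · nlinarith [Real.sq_sqrt hb, Real.sq_sqrt (add_nonneg ha hb), sq_nonneg (√(a + b) - √b)]

lemma sum_div_sqrt_sum_filter_le {ι α : Type*} [LinearOrder α] (s : Finset ι) (r : ι → α)
    {d : ι → ℝ} (hd : ∀ i, 0 ≤ d i) :
    ∑ j ∈ s, d j / √(∑ k ∈ s with r k ≤ r j, d k) ≤ 2 * √(∑ j ∈ s, d j) := by
  induction s using Finset.induction_on_max_value r with
  | empty => simp
  | insert a s ha hmax ih =>
    have hlast : ∑ k ∈ insert a s with r k ≤ r a, d k = d a + ∑ j ∈ s, d j := by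
      rw [Finset.filter_true_of_mem, Finset.sum_insert ha]
      simpa using hmax
    have hrest : ∑ j ∈ s, d j / √(∑ k ∈ insert a s with r k ≤ r j, d k) ≤
        ∑ j ∈ s, d j / √(∑ k ∈ s with r k ≤ r j, d k) := by
      refine Finset.sum_le_sum fun j hj => ?_
      rcases (hd j).eq_or_lt with h0 | hpos
      · simp [← h0]
      have hdenom : 0 < ∑ k ∈ s with r k ≤ r j, d k :=
        hpos.trans_le (Finset.single_le_sum (fun i _ => hd i) (by simp [hj]))
      gcongr
      · exact fun i _ _ => hd i
      · exact Finset.subset_insert a s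
    rw [Finset.sum_insert ha, Finset.sum_insert ha, hlast]
    linarith [div_sqrt_add_le_two_mul_sqrt_sub_sqrt (hd a) (s.sum_nonneg fun i _ => hd i)]

variable {H : Type*} [NormedAddCommGroup H] [InnerProductSpace ℝ H]

lemma localSqFn_eq_sqrt_sum_norm_sq (s : Finset DyadicI) (x : DyadicI → H) {J : DyadicI} {t : ℝ}
    (ht : t ∈ toSet J) :
    localSqFn s x J = √(∑ K ∈ s with K.n ≤ J.n, ‖x K‖ ^ 2 * K.ind t) := by
  rw [localSqFn_eq_sqFn ht, sqFn_eq_sqrt_sum_norm_sq, Finset.sum_filter]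
  congr! 2 with K
  by_cases hK : K.n ≤ J.n
  · rw [truncCoef, if_pos (Nat.lt_succ_of_le hK), if_pos hK]
  · rw [truncCoef, if_neg (mt Nat.le_of_lt_succ hK), if_neg hK]
    simp

lemma sum_norm_sq_div_localSqFn_mul_ind_le (s : Finset DyadicI) (x : DyadicI → H) (t : ℝ) :
    ∑ J ∈ s, ‖x J‖ ^ 2 / localSqFn s x J * J.ind t ≤ 2 * sqFn s x t := by
  rw [sqFn_eq_sqrt_sum_norm_sq]
  refine le_of_eq_of_le (Finset.sum_congr rfl fun J _ => ?_) (sum_div_sqrt_sum_filter_le s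
    DyadicI.n fun J => mul_nonneg (sq_nonneg ‖x J‖) (J.ind_nonneg t))
  by_cases ht : t ∈ toSet J
  · rw [localSqFn_eq_sqrt_sum_norm_sq s x ht, div_mul_eq_mul_div]
  · simp [ht]

lemma sum_localSqFn_mul_le {X : Type*} [NormedAddCommGroup X] [NormedSpace ℝ X]
    (s : Finset DyadicI) (x : DyadicI → X) {t : ℝ} {φ : DyadicI → ℝ} (hφ : ∀ J, 0 ≤ φ J)
    (hsupp : ∀ J, t ∉ toSet J → φ J = 0) (hsum : ∑ J ∈ s, φ J ≤ 1) :
    ∑ J ∈ s, localSqFn s x J * φ J ≤ sqFn s x t := by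
  calc ∑ J ∈ s, localSqFn s x J * φ J ≤ ∑ J ∈ s, sqFn s x t * φ J := by
        refine Finset.sum_le_sum fun J _ => ?_
        by_cases ht : t ∈ toSet J
        · exact mul_le_mul_of_nonneg_right (localSqFn_le_sqFn ht) (hφ J)
        · simp [hsupp J ht]
    _ = sqFn s x t * ∑ J ∈ s, φ J := Finset.mul_sum .. |>.symm
    _ ≤ sqFn s x t := mul_le_of_le_one_right (sqFn_nonneg s x t) hsum

lemma mul_sqrt_le_sq_div_add_mul_sq {a A θ : ℝ} (ha : 0 ≤ a) (haA : a ≤ A) (hθ : 0 ≤ θ) :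
    a * √θ ≤ (a ^ 2 / A + A * θ) / 2 := by
  rcases (ha.trans haA).eq_or_lt with rfl | hA
  · simp [le_antisymm haA ha]
  have hgap : (a ^ 2 / A + A * θ) / 2 - a * √θ = (a - A * √θ) ^ 2 / (2 * A) := by
    nth_rewrite 1 [← Real.sq_sqrt hθ]
    field_simp
    ring
  linarith [show 0 ≤ (a - A * √θ) ^ 2 / (2 * A) by positivity]

/- The duality between `H¹` and `BMO`, for the `BMO` function whose coefficients are the square
roots of the averages of the `φ J`. -/
lemma sum_norm_mul_sqrt_mul_len_le (s : Finset DyadicI) (x : DyadicI → H)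
    {φ : DyadicI → ℝ → ℝ} (hint : ∀ J ∈ s, IntegrableOn (φ J) (Icc 0 1)) (hφ : ∀ J t, 0 ≤ φ J t)
    (hsupp : ∀ J t, t ∉ toSet J → φ J t = 0) (hsum : ∀ t, ∑ J ∈ s, φ J t ≤ 1) :
    ∑ J ∈ s, ‖x J‖ * √((∫ t in Icc (0 : ℝ) 1, φ J t) / len J) * len J ≤
      3 / 2 * HpNormV 1 s x := by
  set A : DyadicI → ℝ := localSqFn s x
  have hsqFn : IntegrableOn (sqFn s x) (Icc 0 1) := by
    simpa using integrableOn_sqFn_rpow s x zero_le_one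
  have hTelescope : ∑ J ∈ s, ‖x J‖ ^ 2 / A J * len J ≤ 2 * HpNormV 1 s x := by
    simp_rw [HpNormV_one, ← integral_const_mul, ← integral_ind, ← integral_const_mul]
    rw [← integral_finsetSum _ fun J _ => J.integrableOn_ind.const_mul _]
    exact integral_mono (integrable_finsetSum _ fun J _ => J.integrableOn_ind.const_mul _)
      (hsqFn.const_mul 2) (sum_norm_sq_div_localSqFn_mul_ind_le s x)
  have hPartition : ∑ J ∈ s, A J * ∫ t in Icc (0 : ℝ) 1, φ J t ≤ HpNormV 1 s x := by
    simp_rw [HpNormV_one, ← integral_const_mul]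
    rw [← integral_finsetSum _ fun J hJ => (hint J hJ).const_mul _]
    exact integral_mono (integrable_finsetSum _ fun J hJ => (hint J hJ).const_mul _) hsqFn
      fun t => sum_localSqFn_mul_le s x (fun J => hφ J t) (fun J => hsupp J t) (hsum t)
  have hTerm (J : DyadicI) (hJ : J ∈ s) :
      ‖x J‖ * √((∫ t in Icc (0 : ℝ) 1, φ J t) / len J) * len J ≤
        (‖x J‖ ^ 2 / A J * len J + A J * ∫ t in Icc (0 : ℝ) 1, φ J t) / 2 := by
    have hlen := J.len_pos
    have hq : 0 ≤ ∫ t in Icc (0 : ℝ) 1, φ J t := integral_nonneg (hφ J)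
    calc ‖x J‖ * √((∫ t in Icc (0 : ℝ) 1, φ J t) / len J) * len J
        ≤ (‖x J‖ ^ 2 / A J + A J * ((∫ t in Icc (0 : ℝ) 1, φ J t) / len J)) / 2 * len J := by
          gcongr
          exact mul_sqrt_le_sq_div_add_mul_sq (norm_nonneg _) (norm_le_localSqFn hJ) (by positivity)
      _ = (‖x J‖ ^ 2 / A J * len J + A J * ∫ t in Icc (0 : ℝ) 1, φ J t) / 2 := by
          rw [div_mul_eq_mul_div, add_mul, mul_assoc (A J), div_mul_cancel₀ _ hlen.ne']
  have hSum := Finset.sum_le_sum hTerm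
  rw [← Finset.sum_div, Finset.sum_add_distrib] at hSum
  linarith

end FeffermanInequality

section MaximalFunction

section CauchySchwarz

variable {α : Type*} [MeasurableSpace α] {μ : Measure α} {f g : α → ℝ}

lemma memLp_two_sqrt (hf : Integrable f μ) (hf0 : ∀ a, 0 ≤ f a) : MemLp (fun a => √(f a)) 2 μ := by
  rw [memLp_two_iff_integrable_sq
    (Real.continuous_sqrt.comp_aestronglyMeasurable hf.aestronglyMeasurable)]
  simpa only [Real.sq_sqrt (hf0 _)] using hf

lemma integral_le_sqrt_of_le_sqrt_mul {h : α → ℝ} (hf : Integrable f μ) (hg : Integrable g μ)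
    (hf0 : ∀ a, 0 ≤ f a) (hg0 : ∀ a, 0 ≤ g a) (h0 : ∀ a, 0 ≤ h a)
    (hle : ∀ a, h a ≤ √(f a * g a)) :
    ∫ a, h a ∂μ ≤ √((∫ a, f a ∂μ) * ∫ a, g a ∂μ) := by
  have hf2 := memLp_two_sqrt hf hf0
  have hg2 := memLp_two_sqrt hg hg0
  calc ∫ a, h a ∂μ ≤ ∫ a, √(f a) * √(g a) ∂μ :=
        integral_mono_of_nonneg (.of_forall h0) (hf2.integrable_mul hg2)
          (.of_forall fun a => (hle a).trans_eq (Real.sqrt_mul (hf0 a) _))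
    _ ≤ √(∫ a, f a ∂μ) * √(∫ a, g a ∂μ) := by
        rw [← ENNReal.ofReal_ofNat] at hf2 hg2
        simpa only [Real.rpow_two, Real.sq_sqrt (hf0 _), Real.sq_sqrt (hg0 _),
          ← Real.sqrt_eq_rpow] using
          integral_mul_le_Lp_mul_Lq_of_nonneg Real.HolderConjugate.two_two
            (.of_forall fun a => Real.sqrt_nonneg (f a))
            (.of_forall fun a => Real.sqrt_nonneg (g a)) hf2 hg2
    _ = √((∫ a, f a ∂μ) * ∫ a, g a ∂μ) := (Real.sqrt_mul (integral_nonneg hf0) _).symm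

end CauchySchwarz

lemma exists_measurable_sup_eq_sum {α ι : Type*} [MeasurableSpace α] (s : Finset ι)
    {g : ι → α → ℝ≥0} (hg : ∀ i, Measurable (g i)) :
    ∃ e : ι → α → ℝ≥0, (∀ i, Measurable (e i)) ∧ (∀ a, ∑ i ∈ s, e i a ≤ 1) ∧
      ∀ a, (s.sup fun i => g i a) = ∑ i ∈ s, e i a * g i a := by
  let M : α → ℝ≥0 := s.sup g
  let c : ι → α → ℝ≥0 := fun i => {a | g i a = M a}.indicator 1
  have hM : Measurable M :=
    Finset.sup_induction measurable_const (fun _ h _ h' => h.sup h') fun i _ => hg i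
  have hc (i) : Measurable (c i) := measurable_one.indicator (measurableSet_eq_fun (hg i) hM)
  refine ⟨fun i a => c i a / ∑ j ∈ s, c j a,
    fun i => (hc i).div (Finset.measurable_fun_sum s fun j _ => hc j), fun a => ?_, fun a => ?_⟩
  · rw [← Finset.sum_div]
    exact div_self_le_one _
  · have hcg (i) : c i a * g i a = c i a * M a := by
      by_cases h : g i a = M a <;> simp [c, h]
    rcases s.eq_empty_or_nonempty with rfl | hs
    · simp
    obtain ⟨j, hj, hMj⟩ := Finset.exists_mem_eq_sup s hs fun i => g i a
    have hpos : ∑ i ∈ s, c i a ≠ 0 := by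
      refine (Finset.sum_pos_iff.2 ⟨j, hj, ?_⟩).ne'
      simp [c, M, Finset.sup_apply, hMj]
    simp_rw [← Finset.sup_apply, div_mul_eq_mul_div, hcg]
    rw [← Finset.sum_div, ← Finset.sum_mul, mul_div_cancel_left₀ _ hpos]

/-- The maximal function `max_{J ∈ s} u_J 1_J` of a nonnegative family `u`. It is encoded as a
supremum in `ℝ≥0` so that it vanishes for empty `s`. -/
def haarMax (s : Finset DyadicI) (u : DyadicI → ℝ) (t : ℝ) : ℝ :=
  (s.sup fun J => (u J * J.ind t).toNNReal : ℝ≥0)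

variable {s : Finset DyadicI} {u : DyadicI → ℝ}

lemma haarMax_nonneg (s : Finset DyadicI) (u : DyadicI → ℝ) (t : ℝ) : 0 ≤ haarMax s u t :=
  NNReal.coe_nonneg _

lemma le_haarMax {J : DyadicI} {t : ℝ} (hJ : J ∈ s) (ht : t ∈ toSet J) :
    u J ≤ haarMax s u t := by
  have hle : (u J * J.ind t).toNNReal ≤ s.sup fun K => (u K * K.ind t).toNNReal :=
    Finset.le_sup (f := fun K => (u K * K.ind t).toNNReal) hJ
  calc u J = u J * J.ind t := by simp [ht]
    _ ≤ haarMax s u t := Real.toNNReal_le_iff_le_coe.1 hle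

lemma exists_haarMax_eq_sum (s : Finset DyadicI) (hu : ∀ J, 0 ≤ u J) :
    ∃ φ : DyadicI → ℝ → ℝ, (∀ J ∈ s, IntegrableOn (φ J) (Icc 0 1)) ∧ (∀ J t, 0 ≤ φ J t) ∧
      (∀ J t, t ∉ toSet J → φ J t = 0) ∧ (∀ t, ∑ J ∈ s, φ J t ≤ 1) ∧
      ∀ t, haarMax s u t = ∑ J ∈ s, u J * φ J t := by
  obtain ⟨e, hmeas, hsum, hsup⟩ := exists_measurable_sup_eq_sum s fun J =>
    (J.measurable_ind.const_mul (u J)).real_toNNReal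
  have hsum' (t : ℝ) : ∑ J ∈ s, (e J t : ℝ) ≤ 1 := by exact_mod_cast hsum t
  have hle (J) (hJ : J ∈ s) (t) : (e J t : ℝ) ≤ 1 :=
    (Finset.single_le_sum (fun K _ => (e K t).coe_nonneg) hJ).trans (hsum' t)
  refine ⟨fun J t => e J t * J.ind t, fun J hJ => ?_,
    fun J t => mul_nonneg (e J t).coe_nonneg (J.ind_nonneg t), fun J t ht => by simp [ht],
    fun t => (Finset.sum_le_sum fun J _ => ?_).trans (hsum' t), fun t => ?_⟩
  · exact J.integrableOn_ind.bdd_mul (hmeas J).coe_nnreal_real.aestronglyMeasurable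
      (c := 1) (.of_forall fun t => by simpa using hle J hJ t)
  · exact mul_le_of_le_one_right (e J t).coe_nonneg (J.ind_le_one t)
  · rw [haarMax, hsup, NNReal.coe_sum]
    refine Finset.sum_congr rfl fun J _ => ?_
    rw [NNReal.coe_mul, Real.coe_toNNReal _ (mul_nonneg (hu J) (J.ind_nonneg t)), mul_left_comm]

lemma integrableOn_haarMax (s : Finset DyadicI) (hu : ∀ J, 0 ≤ u J) :
    IntegrableOn (haarMax s u) (Icc 0 1) := by
  obtain ⟨φ, hint, -, -, -, hmax⟩ := exists_haarMax_eq_sum s hu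
  rw [funext hmax]
  exact integrable_finsetSum _ fun J hJ => (hint J hJ).const_mul _

lemma exists_integral_haarMax_eq_sum (s : Finset DyadicI) (hu : ∀ J, 0 ≤ u J) :
    ∃ θ : DyadicI → ℝ, (∀ J, 0 ≤ θ J) ∧
      ∫ t in Icc (0 : ℝ) 1, haarMax s u t = ∑ J ∈ s, u J * θ J * len J ∧
      ∀ a : DyadicI → ℝ, ∑ J ∈ s, a J * √(θ J) * len J ≤ 3 / 2 * HpNormV 1 s a := by
  obtain ⟨φ, hint, hφ, hsupp, hsum, hmax⟩ := exists_haarMax_eq_sum s hu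
  refine ⟨fun J => (∫ t in Icc (0 : ℝ) 1, φ J t) / len J,
    fun J => div_nonneg (integral_nonneg (hφ J)) J.len_pos.le, ?_, fun a => ?_⟩
  · simp_rw [hmax]
    rw [integral_finsetSum _ fun J hJ => (hint J hJ).const_mul _]
    refine Finset.sum_congr rfl fun J _ => ?_
    rw [integral_const_mul, mul_assoc, div_mul_cancel₀ _ J.len_pos.ne']
  · refine le_trans (Finset.sum_le_sum fun J _ => ?_)
      (sum_norm_mul_sqrt_mul_len_le s a hint hφ hsupp hsum)
    have hlen := J.len_pos.le
    gcongr
    exact le_abs_self _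

lemma HpNormV_one_mul_sqrt_le {v θ : DyadicI → ℝ} {g : ℝ → ℝ} (hθ : ∀ I, 0 ≤ θ I)
    (hv : ∀ I, 0 ≤ v I) (hg : IntegrableOn g (Icc 0 1)) (hg0 : ∀ t, 0 ≤ g t)
    (hvg : ∀ I ∈ s, ∀ t ∈ toSet I, v I ≤ g t) :
    HpNormV 1 s (fun I => v I * √(θ I)) ≤
      √((∫ t in Icc (0 : ℝ) 1, g t) * ∑ I ∈ s, v I * θ I * len I) := by
  have hvθ (I : DyadicI) : 0 ≤ v I * θ I := mul_nonneg (hv I) (hθ I)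
  let G : ℝ → ℝ := fun t => ∑ I ∈ s, v I * θ I * I.ind t
  have hG0 (t : ℝ) : 0 ≤ G t := s.sum_nonneg fun I _ => mul_nonneg (hvθ I) (I.ind_nonneg t)
  have hGint : IntegrableOn G (Icc 0 1) :=
    integrable_finsetSum _ fun I _ => I.integrableOn_ind.const_mul _
  have hIntG : ∫ t in Icc (0 : ℝ) 1, G t = ∑ I ∈ s, v I * θ I * len I := by
    rw [integral_finsetSum _ fun I _ => I.integrableOn_ind.const_mul _]
    simp_rw [integral_const_mul, integral_ind]
  have hpointwise (t : ℝ) : sqFn s (fun I => v I * √(θ I)) t ≤ √(g t * G t) := by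
    rw [sqFn_eq_sqrt_sum_norm_sq, Finset.mul_sum]
    refine Real.sqrt_le_sqrt (Finset.sum_le_sum fun I hI => ?_)
    by_cases ht : t ∈ toSet I
    · simp only [Real.norm_eq_abs, sq_abs, mul_pow, Real.sq_sqrt (hθ I), ind,
        indicator_of_mem ht, mul_one]
      rw [sq, mul_assoc]
      exact mul_le_mul_of_nonneg_right (hvg I hI t ht) (hvθ I)
    · simp [ht]
  rw [HpNormV_one, ← hIntG]
  exact integral_le_sqrt_of_le_sqrt_mul hg hGint hg0 hG0 (sqFn_nonneg s _) hpointwise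

lemma rearrCoef_nonneg (τ : DyadicI → DyadicI) (p : ℝ) (s : Finset DyadicI)
    (hu : ∀ I, 0 ≤ u I) (J : DyadicI) : 0 ≤ rearrCoef τ p s u J := by
  refine s.sum_nonneg fun I _ => ?_
  split_ifs
  · exact smul_nonneg (Real.rpow_nonneg (div_nonneg I.len_pos.le (τ I).len_pos.le) _) (hu I)
  · rfl

lemma le_sq_mul_of_le_mul_sqrt_mul {c G M : ℝ} (hG : 0 ≤ G) (hM : 0 ≤ M) (h : M ≤ c * √(G * M)) :
    M ≤ c ^ 2 * G := by
  rcases hM.eq_or_lt with rfl | hpos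
  · positivity
  refine le_of_mul_le_mul_right ?_ hpos
  calc M * M ≤ (c * √(G * M)) * (c * √(G * M)) := mul_self_le_mul_self hM h
    _ = c ^ 2 * G * M := by rw [mul_mul_mul_comm, Real.mul_self_sqrt (by positivity)]; ring

theorem integral_haarMax_rearrCoef_le {τ : DyadicI → DyadicI} (hτ : Function.Injective τ)
    (h1 : hpOpNorm τ 1 ℝ < ⊤) {v : DyadicI → ℝ} {g : ℝ → ℝ} (hv : ∀ I, 0 ≤ v I)
    (hg : IntegrableOn g (Icc 0 1)) (hg0 : ∀ t, 0 ≤ g t)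
    (hvg : ∀ I ∈ s, ∀ t ∈ toSet I, v I ≤ g t) :
    ∫ t in Icc (0 : ℝ) 1, haarMax (s.image τ) (rearrCoef τ 1 s v) t ≤
      (3 / 2 * (hpOpNorm τ 1 ℝ).toReal) ^ 2 * ∫ t in Icc (0 : ℝ) 1, g t := by
  obtain ⟨θ, hθ, hM, hdual⟩ :=
    exists_integral_haarMax_eq_sum (s.image τ) (rearrCoef_nonneg τ 1 s hv)
  set M := ∫ t in Icc (0 : ℝ) 1, haarMax (s.image τ) (rearrCoef τ 1 s v) t
  set K := (hpOpNorm τ 1 ℝ).toReal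
  let a : DyadicI → ℝ := fun I => v I * √(θ (τ I))
  have hcoef (b : DyadicI → ℝ) (I) (hI : I ∈ s) : rearrCoef τ 1 s b (τ I) * len (τ I) =
      b I * len I := by
    rw [rearrCoef_apply hτ b hI, one_div_one, Real.rpow_one, smul_eq_mul, mul_right_comm,
      div_mul_cancel₀ _ (τ I).len_pos.ne', mul_comm]
  have hMv : M = ∑ I ∈ s, v I * θ (τ I) * len I := by
    rw [hM, Finset.sum_image hτ.injOn]
    refine Finset.sum_congr rfl fun I hI => ?_
    rw [mul_right_comm, hcoef v I hI, mul_right_comm]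
  have hMa : M = ∑ J ∈ s.image τ, rearrCoef τ 1 s a J * √(θ J) * len J := by
    rw [hMv, Finset.sum_image hτ.injOn]
    refine Finset.sum_congr rfl fun I hI => ?_
    rw [mul_right_comm _ (√_), hcoef a I hI, mul_right_comm (a I), mul_assoc (v I) (√_),
      Real.mul_self_sqrt (hθ _)]
  refine le_sq_mul_of_le_mul_sqrt_mul (integral_nonneg hg0)
    (integral_nonneg fun t => haarMax_nonneg _ _ t) ?_
  calc M ≤ 3 / 2 * HpNormV 1 (s.image τ) (rearrCoef τ 1 s a) := hMa.trans_le (hdual _)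
    _ ≤ 3 / 2 * (K * HpNormV 1 s a) := by gcongr; exact HpNormV_rearrCoef_le one_ne_zero h1 s a
    _ ≤ 3 / 2 * (K * √((∫ t in Icc (0 : ℝ) 1, g t) * M)) := by
        rw [hMv]
        gcongr
        exact HpNormV_one_mul_sqrt_le (fun I => hθ (τ I)) hv hg hg0 hvg
    _ = 3 / 2 * K * √((∫ t in Icc (0 : ℝ) 1, g t) * M) := by rw [mul_assoc]

end MaximalFunction

section Extrapolation

variable {X : Type*} [NormedAddCommGroup X] [NormedSpace ℝ X] {τ : DyadicI → DyadicI} {p : ℝ}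

lemma rpow_mul_rpow_eq_rpow_mul {w S : ℝ} (hw : 0 < w) (hS : 0 < S) (hp : p ≠ 0) :
    (w * S ^ p) ^ (1 / p - 1 / 2) * (w ^ (1 / 2 : ℝ) * S ^ (p / 2 - 1)) = w ^ (1 / p) := by
  rw [Real.mul_rpow hw.le (Real.rpow_nonneg hS.le p), ← Real.rpow_mul hS.le, mul_mul_mul_comm,
    ← Real.rpow_add hw, ← Real.rpow_add hS, sub_add_cancel]
  rw [show p * (1 / p - 1 / 2) + (p / 2 - 1) = 0 by field_simp; ring, Real.rpow_zero, mul_one]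

lemma sqFn_rearrCoef_le_haarMax_rpow_mul (hτ : Function.Injective τ) (hp : 0 < p) (hp2 : p ≤ 2)
    (s : Finset DyadicI) (x : DyadicI → X) (t : ℝ) :
    sqFn (s.image τ) (rearrCoef τ p s x) t ≤
      haarMax (s.image τ) (rearrCoef τ 1 s fun I => localSqFn s x I ^ p) t ^ (1 / p - 1 / 2) *
        sqFn (s.image τ) (rearrCoef τ 2 s (rpowCoef (p / 2) s x)) t := by
  have hexp : 0 ≤ 1 / p - 1 / 2 := sub_nonneg.2 (one_div_le_one_div_of_le hp hp2)
  refine sqFn_le_mul_of_forall_smul (Real.rpow_nonneg (haarMax_nonneg _ _ t) _) fun J hJ ht => ?_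
  obtain ⟨I, hI, rfl⟩ := Finset.mem_image.1 hJ
  have hw : 0 < len I / len (τ I) := div_pos I.len_pos (τ I).len_pos
  have hS := localSqFn_nonneg s x I
  have hmax := le_haarMax (u := rearrCoef τ 1 s fun I => localSqFn s x I ^ p) hJ ht
  simp only [rpowCoef, rearrCoef_apply hτ _ hI, one_div_one, Real.rpow_one, smul_eq_mul] at hmax ⊢
  have hwS : 0 ≤ len I / len (τ I) * localSqFn s x I ^ p :=
    mul_nonneg hw.le (Real.rpow_nonneg hS p)
  refine ⟨(len I / len (τ I) * localSqFn s x I ^ p) ^ (1 / p - 1 / 2), ?_, ?_⟩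
  · rw [abs_of_nonneg (Real.rpow_nonneg hwS _)]
    exact Real.rpow_le_rpow hwS hmax hexp
  rcases hS.eq_or_lt with hS0 | hSpos
  · have hx : x I = 0 := norm_le_zero_iff.1 ((norm_le_localSqFn hI).trans_eq hS0.symm)
    simp [hx]
  · rw [smul_smul, smul_smul, mul_assoc, rpow_mul_rpow_eq_rpow_mul hw hSpos hp.ne']

lemma rpow_mul_rpow_le_add_sq {m V : ℝ} (hm : 0 ≤ m) (hV : 0 ≤ V) (hp : 0 < p) (hp2 : p ≤ 2) :
    (m ^ (1 / p - 1 / 2) * V) ^ p ≤ m + V ^ (2 : ℝ) := by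
  have hexp : (1 / p - 1 / 2) * p = 1 - p / 2 := by field_simp
  calc (m ^ (1 / p - 1 / 2) * V) ^ p = m ^ (1 - p / 2) * (V ^ (2 : ℝ)) ^ (p / 2) := by
        rw [Real.mul_rpow (Real.rpow_nonneg hm _) hV, ← Real.rpow_mul hm, hexp,
          ← Real.rpow_mul hV, mul_div_cancel₀ p two_ne_zero]
    _ ≤ (1 - p / 2) * m + p / 2 * V ^ (2 : ℝ) :=
        Real.geom_mean_le_arith_mean2_weighted (by linarith) (by linarith) hm
          (Real.rpow_nonneg hV 2) (sub_add_cancel 1 (p / 2))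
    _ ≤ m + V ^ (2 : ℝ) := by
        gcongr
        · exact mul_le_of_le_one_left hm (by linarith)
        · exact mul_le_of_le_one_left (Real.rpow_nonneg hV 2) (by linarith)

theorem integral_sqFn_rearrCoef_rpow_le (hτ : Function.Injective τ) (h1 : hpOpNorm τ 1 ℝ < ⊤)
    (hp : 0 < p) (hp2 : p ≤ 2) (s : Finset DyadicI) (x : DyadicI → X) :
    ∫ t in Icc (0 : ℝ) 1, sqFn (s.image τ) (rearrCoef τ p s x) t ^ p ≤
      (3 / 2 * (hpOpNorm τ 1 ℝ).toReal) ^ 2 * (∫ t in Icc (0 : ℝ) 1, sqFn s x t ^ p) +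
        ∫ t in Icc (0 : ℝ) 1,
          sqFn (s.image τ) (rearrCoef τ 2 s (rpowCoef (p / 2) s x)) t ^ (2 : ℝ) := by
  have hv (I) : 0 ≤ localSqFn s x I ^ p := Real.rpow_nonneg (localSqFn_nonneg s x I) p
  have hmaxInt := integrableOn_haarMax (s.image τ) (rearrCoef_nonneg τ 1 s hv)
  have hsqInt := integrableOn_sqFn_rpow (s.image τ) (rearrCoef τ 2 s (rpowCoef (p / 2) s x))
    zero_le_two
  have hmax := integral_haarMax_rearrCoef_le (s := s) hτ h1 hv
    (integrableOn_sqFn_rpow s x hp.le) (fun t => Real.rpow_nonneg (sqFn_nonneg s x t) p)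
    fun I _ t ht => Real.rpow_le_rpow (localSqFn_nonneg s x I) (localSqFn_le_sqFn ht) hp.le
  refine le_trans (integral_mono (integrableOn_sqFn_rpow _ _ hp.le) (hmaxInt.add hsqInt)
    fun t => ?_) ((integral_add hmaxInt hsqInt).trans_le (add_le_add_left hmax _))
  exact (Real.rpow_le_rpow (sqFn_nonneg _ _ t)
    (sqFn_rearrCoef_le_haarMax_rpow_mul hτ hp hp2 s x t) hp.le).trans
    (rpow_mul_rpow_le_add_sq (haarMax_nonneg _ _ t) (sqFn_nonneg _ _ t) hp hp2)

lemma sqFn_rpowCoef_sq_le (hp : 0 < p) (hp2 : p ≤ 2) (s : Finset DyadicI) (x : DyadicI → X)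
    (t : ℝ) : sqFn s (rpowCoef (p / 2) s x) t ^ (2 : ℝ) ≤ (2 / p) ^ 2 * sqFn s x t ^ p := by
  calc sqFn s (rpowCoef (p / 2) s x) t ^ (2 : ℝ)
      ≤ ((p / 2)⁻¹ * sqFn s x t ^ (p / 2)) ^ (2 : ℝ) :=
        Real.rpow_le_rpow (sqFn_nonneg _ _ t)
          (sqFn_rpowCoef_le (half_pos hp) ((div_le_one two_pos).2 hp2) s x t) zero_le_two
    _ = (2 / p) ^ 2 * sqFn s x t ^ p := by
        rw [inv_div, Real.mul_rpow (by positivity) (Real.rpow_nonneg (sqFn_nonneg s x t) _),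
          ← Real.rpow_mul (sqFn_nonneg s x t), div_mul_cancel₀ p two_ne_zero, Real.rpow_two]

lemma integral_sqFn_rearrCoef_rpowCoef_sq_le (h2 : hpOpNorm τ 2 X < ⊤) (hp : 0 < p)
    (hp2 : p ≤ 2) (s : Finset DyadicI) (x : DyadicI → X) :
    ∫ t in Icc (0 : ℝ) 1,
        sqFn (s.image τ) (rearrCoef τ 2 s (rpowCoef (p / 2) s x)) t ^ (2 : ℝ) ≤
      (hpOpNorm τ 2 X).toReal ^ 2 * (2 / p) ^ 2 * ∫ t in Icc (0 : ℝ) 1, sqFn s x t ^ p := by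
  have hbound := Real.rpow_le_rpow (HpNormV_nonneg _ _ _)
    (HpNormV_rearrCoef_le two_ne_zero h2 s (rpowCoef (p / 2) s x)) zero_le_two
  rw [Real.mul_rpow ENNReal.toReal_nonneg (HpNormV_nonneg _ _ _), HpNormV_rpow two_ne_zero,
    HpNormV_rpow two_ne_zero, Real.rpow_two] at hbound
  rw [mul_assoc, ← integral_const_mul]
  refine hbound.trans (mul_le_mul_of_nonneg_left ?_ (sq_nonneg _))
  exact integral_mono (integrableOn_sqFn_rpow s _ zero_le_two)
    ((integrableOn_sqFn_rpow s x hp.le).const_mul _) (sqFn_rpowCoef_sq_le hp hp2 s x)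

end Extrapolation

theorem statement14_general (X : Type*) [NormedAddCommGroup X] [NormedSpace ℝ X]
    (τ : DyadicI → DyadicI) (hτ : Function.Injective τ)
    (h1 : hpOpNormS τ 1 < ⊤) (h2 : hpOpNorm τ 2 X < ⊤) :
    ∀ p : ℝ, 0 < p → p ≤ 2 → hpOpNorm τ p X < ⊤ := by
  intro p hp hp2
  rw [hpOpNormS_eq_hpOpNorm] at h1
  set K₁ := (hpOpNorm τ 1 ℝ).toReal
  set K₂ := (hpOpNorm τ 2 X).toReal
  refine hpOpNorm_lt_top_of_integral_le (B := (3 / 2 * K₁) ^ 2 + K₂ ^ 2 * (2 / p) ^ 2) hp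
    fun s x => ?_
  calc ∫ t in Icc (0 : ℝ) 1, sqFn (s.image τ) (rearrCoef τ p s x) t ^ p
      ≤ (3 / 2 * K₁) ^ 2 * (∫ t in Icc (0 : ℝ) 1, sqFn s x t ^ p) +
          ∫ t in Icc (0 : ℝ) 1,
            sqFn (s.image τ) (rearrCoef τ 2 s (rpowCoef (p / 2) s x)) t ^ (2 : ℝ) :=
        integral_sqFn_rearrCoef_rpow_le hτ h1 hp hp2 s x
    _ ≤ (3 / 2 * K₁) ^ 2 * (∫ t in Icc (0 : ℝ) 1, sqFn s x t ^ p) +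
          K₂ ^ 2 * (2 / p) ^ 2 * ∫ t in Icc (0 : ℝ) 1, sqFn s x t ^ p := by
        gcongr
        exact integral_sqFn_rearrCoef_rpowCoef_sq_le h2 hp hp2 s x
    _ = ((3 / 2 * K₁) ^ 2 + K₂ ^ 2 * (2 / p) ^ 2) * ∫ t in Icc (0 : ℝ) 1, sqFn s x t ^ p :=
        (add_mul ..).symm

/-- Let `X` be a Banach space and `τ : D → D` injective. If the
scalar rearrangement operator is bounded on dyadic `H¹` (`‖T_{τ,1}‖₁ < ∞`) and the
vector-valued rearrangement operator is bounded on `H²_X` (`‖T_{τ,2} ⊗ Id_X‖₂ < ∞`),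
then `‖T_{τ,p} ⊗ Id_X‖_p < ∞` for every `0 < p ≤ 2`. -/
theorem statement14 (X : Type*) [NormedAddCommGroup X] [NormedSpace ℝ X]
    [CompleteSpace X] (τ : DyadicI → DyadicI) (hτ : Function.Injective τ)
    (h1 : hpOpNormS τ 1 < ⊤) (h2 : hpOpNorm τ 2 X < ⊤) :
    ∀ p : ℝ, 0 < p → p ≤ 2 → hpOpNorm τ p X < ⊤ :=
  statement14_general X τ hτ h1 h2
end
end

section
/- Let 0 < p < ∞ and let X be a Banach space. There are constants c_p, A_p > 0 depending only on p such that for every finitely supported X-valued Haar expansion f = Σ_J x_J h_J there exist a collection E ⊆ D, a partition of the Haar support of f into blocks {B(I) : I ∈ E} with tops in E, and integers n(I) ∈ ℤ for I ∈ E, such that: (i) ⟦E⟧ ≤ 4; (ii) 𝕊(f_I) ≤ 2^{n(I)} everywhere, where f_I = Σ_{J ∈ B(I)} x_J h_J; and (iii) c_p ‖f‖_{H^p_X}^p ≤ Σ_{I∈E} |I| 2^{p·n(I)} ≤ A_p ‖f‖_{H^p_X}^p. -/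
open MeasureTheory Set
open scoped ENNReal NNReal Classical

noncomputable section

open DyadicI

/-!
By convexity of the norm, `𝕊(f)(t)` is monotone in the tower of intervals of the Haar support `s`
over `t`. For `J ∈ s`, let `a(J)` be the value of `𝕊` obtained from the tower over `J`, so that
`𝕊(f) ≥ a(J)` on `J`, and let `n(J)` be the least integer with `|J ∩ {𝕊(f) > 2 ^ n(J)}| ≤ |J| / 2`;
in particular `a(J) ≤ 2 ^ n(J)`. The family `E` is chosen by a stopping time from coarse to fine:
`J` is selected if `a(J) > 2 ^ n(K)` for every selected `K` strictly above `J`. The other intervals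
join the block of the smallest selected interval above them.

* If `J ⊂ I` are selected, then `𝕊(f) ≥ a(J) > 2 ^ n(I)` on `J`. So the sets
  `I ∩ {𝕊(f) ≤ 2 ^ n(I)}`, which fill half of each `I`, are disjoint, and `E` is a Carleson family.
* If `J` lies in the block of `I`, then `a(J) ≤ 2 ^ n(I)`, because the thresholds increase down
  chains of selected intervals. This bounds `𝕊(f_I)`, and hence `𝕊(f)` by
  `max {2 ^ n(I) | t ∈ I ∈ E}`, which is the lower estimate.
* Since `n` is strictly increasing down chains in `E`, the sum of `2 ^ (p * n(I))` over the `I ∈ E`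
  with `t ∈ I` and `2 ^ (n(I) - 1) < 𝕊(f)(t)` is dominated by a geometric series, of size
  comparable to `𝕊(f)(t) ^ p`. The set of these `t` fills half of each `I`, and integrating gives
  the upper estimate.
-/

section Rademacher

variable {ι X : Type*} [SeminormedAddCommGroup X]

/-- The second moment `E_ε ‖v + ∑_{i ∈ A} ε_i y_i‖²` of a Rademacher sum shifted by `v`. A choice
of signs is encoded by the set `T ⊆ A` of indices carrying the sign `+1`; the shift makes the
moment accessible to induction on `A`. -/
def rademacherMoment (A : Finset ι) (y : ι → X) (v : X) : ℝ :=
  (∑ T ∈ A.powerset, ‖v + ∑ i ∈ A, if i ∈ T then y i else -y i‖ ^ 2) / 2 ^ A.card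

/-- The Rademacher norm `(E_ε ‖∑_{i ∈ A} ε_i y_i‖²)^{1/2}` of the family `y` restricted to `A`. -/
def rademacherNorm (y : ι → X) (A : Finset ι) : ℝ := √(rademacherMoment A y 0)

lemma rademacherMoment_empty (y : ι → X) (v : X) : rademacherMoment ∅ y v = ‖v‖ ^ 2 := by
  simp [rademacherMoment]

lemma rademacherMoment_insert {A : Finset ι} {a : ι} (ha : a ∉ A) (y : ι → X) (v : X) :
    rademacherMoment (insert a A) y v =
      (rademacherMoment A y (v + y a) + rademacherMoment A y (v - y a)) / 2 := by
  have hneg : ∀ T ∈ A.powerset,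
      v + ∑ i ∈ insert a A, (if i ∈ T then y i else -y i) =
        v - y a + ∑ i ∈ A, if i ∈ T then y i else -y i := by
    intro T hT
    rw [Finset.sum_insert ha, if_neg fun h => ha (Finset.mem_powerset.1 hT h), ← add_assoc,
      ← sub_eq_add_neg]
  have hpos (T : Finset ι) :
      v + ∑ i ∈ insert a A, (if i ∈ insert a T then y i else -y i) =
        v + y a + ∑ i ∈ A, if i ∈ T then y i else -y i := by
    rw [Finset.sum_insert ha, if_pos (Finset.mem_insert_self a T), ← add_assoc]
    congr 1
    refine Finset.sum_congr rfl fun i hi => ?_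
    simp only [Finset.mem_insert, ne_of_mem_of_not_mem hi ha, false_or]
  simp only [rademacherMoment]
  rw [Finset.sum_powerset_insert ha, Finset.sum_congr rfl fun T hT => by rw [hneg T hT],
    Finset.card_insert_of_notMem ha, pow_succ]
  simp only [hpos]
  ring

lemma rademacherNorm_empty (y : ι → X) : rademacherNorm y ∅ = 0 := by
  simp [rademacherNorm, rademacherMoment_empty]

lemma rademacherNorm_singleton (y : ι → X) (i : ι) : rademacherNorm y {i} = ‖y i‖ := by
  have h := rademacherMoment_insert (Finset.notMem_empty i) y 0
  rw [insert_empty_eq, rademacherMoment_empty, rademacherMoment_empty, zero_add, zero_sub,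
    norm_neg, add_self_div_two] at h
  rw [rademacherNorm, h, Real.sqrt_sq (norm_nonneg _)]

variable [NormedSpace ℝ X]

lemma rademacherMoment_mul_sign {A : Finset ι} {σ : ι → ℝ} {p : ι → Prop}
    (hp : ∀ i, p i → σ i = 1 ∨ σ i = -1) (hnp : ∀ i, ¬p i → σ i = 0) (y : ι → X) (v : X) :
    rademacherMoment A (fun i => σ i • y i) v = rademacherMoment (A.filter p) y v := by
  induction A using Finset.induction_on generalizing v with
  | empty => simp only [rademacherMoment_empty, Finset.filter_empty]
  | insert a A ha ih =>
    rw [rademacherMoment_insert ha, ih, ih, Finset.filter_insert]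
    by_cases h : p a
    · rw [if_pos h, rademacherMoment_insert fun h' => ha (Finset.mem_of_mem_filter a h')]
      rcases hp a h with hσ | hσ
      · rw [hσ, one_smul]
      · rw [hσ, neg_one_smul, ← sub_eq_add_neg, sub_neg_eq_add, add_comm]
    · rw [if_neg h, hnp a h, zero_smul, add_zero, sub_zero, add_self_div_two]

lemma norm_sq_le_norm_add_sq_add_norm_sub_sq (u w : X) :
    ‖u‖ ^ 2 ≤ (‖u + w‖ ^ 2 + ‖u - w‖ ^ 2) / 2 := by
  have hmid : ‖u‖ ≤ (‖u + w‖ + ‖u - w‖) / 2 := by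
    have h := norm_add_le (u + w) (u - w)
    rw [add_add_sub_cancel, ← two_smul ℝ u, norm_smul, Real.norm_two] at h
    linarith
  nlinarith [norm_nonneg u, sq_nonneg (‖u + w‖ - ‖u - w‖)]

lemma rademacherMoment_le_shift_average (A : Finset ι) (y : ι → X) (v w : X) :
    rademacherMoment A y v ≤
      (rademacherMoment A y (v + w) + rademacherMoment A y (v - w)) / 2 := by
  induction A using Finset.induction_on generalizing v with
  | empty =>
    simpa only [rademacherMoment_empty] using norm_sq_le_norm_add_sq_add_norm_sub_sq v w
  | insert a A ha ih =>
    have hplus := ih (v + y a)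
    have hminus := ih (v - y a)
    rw [add_right_comm, add_sub_right_comm] at hplus
    rw [sub_add_eq_add_sub, sub_right_comm] at hminus
    simp only [rademacherMoment_insert ha]
    linarith

lemma rademacherMoment_monotone (y : ι → X) (v : X) :
    Monotone fun A => rademacherMoment A y v := by
  refine (monotone_iff_forall_covBy _).2 fun A B hAB => ?_
  obtain ⟨a, ha, rfl⟩ := Finset.covBy_iff_exists_insert.1 hAB
  simpa only [rademacherMoment_insert ha] using rademacherMoment_le_shift_average A y v (y a)

lemma rademacherNorm_monotone (y : ι → X) : Monotone (rademacherNorm y) :=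
  fun _ _ h => Real.sqrt_le_sqrt (rademacherMoment_monotone y 0 h)

end Rademacher

namespace DyadicI

lemma len_pos_s16 (I : DyadicI) : 0 < I.len := zpow_pos two_pos _

lemma two_pow_mul_len (I : DyadicI) : 2 ^ I.n * I.len = 1 := by
  rw [len, zpow_neg, zpow_natCast, mul_inv_cancel₀ (by positivity)]

lemma lep_mem_toSet_s16 (I : DyadicI) : I.lep ∈ toSet I :=
  ⟨le_rfl, lt_add_of_pos_right _ I.len_pos_s16⟩

lemma measurableSet_toSet_s16 (I : DyadicI) : MeasurableSet (toSet I) := measurableSet_Ico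

lemma volume_toSet (I : DyadicI) : volume (toSet I) = ENNReal.ofReal I.len := by
  rw [toSet, Real.volume_Ico, add_sub_cancel_left]

lemma volume_real_toSet (I : DyadicI) : volume.real (toSet I) = I.len := by
  rw [measureReal_def, volume_toSet, ENNReal.toReal_ofReal I.len_pos_s16.le]

lemma volume_toSet_ne_top (I : DyadicI) : volume (toSet I) ≠ ∞ := by
  rw [volume_toSet]
  exact ENNReal.ofReal_ne_top

lemma mem_toSet_iff_floor {I : DyadicI} {t : ℝ} : t ∈ toSet I ↔ ⌊2 ^ I.n * t⌋ = I.k := by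
  have hlen : I.len = (2 ^ I.n)⁻¹ := eq_inv_of_mul_eq_one_right I.two_pow_mul_len
  have hpow : (0 : ℝ) < 2 ^ I.n := by positivity
  rw [toSet, lep, ← add_one_mul, hlen, mem_Ico, ← div_eq_mul_inv, ← div_eq_mul_inv,
    div_le_iff₀' hpow, lt_div_iff₀' hpow, Int.floor_eq_iff, Int.cast_natCast]

lemma toSet_subset_Icc_s16 (I : DyadicI) : toSet I ⊆ Icc 0 1 := by
  have hk : (I.k + 1 : ℝ) ≤ 2 ^ I.n := mod_cast I.hk
  have hend : I.lep + I.len ≤ 1 := calc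
    I.lep + I.len = (I.k + 1) * I.len := by rw [lep, add_one_mul]
    _ ≤ 2 ^ I.n * I.len := by gcongr; exact I.len_pos_s16.le
    _ = 1 := I.two_pow_mul_len
  exact fun t ht => ⟨(mul_nonneg I.k.cast_nonneg I.len_pos_s16.le).trans ht.1, ht.2.le.trans hend⟩

lemma n_le_of_toSet_subset {I J : DyadicI} (h : toSet J ⊆ toSet I) : I.n ≤ J.n := by
  have hlen : J.len ≤ I.len := by
    simpa only [volume_real_toSet] using measureReal_mono h I.volume_toSet_ne_top
  rw [len, len, zpow_le_zpow_iff_right₀ one_lt_two] at hlen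
  omega

lemma toSet_subset_of_mem_of_n_le {I J : DyadicI} {t : ℝ} (hI : t ∈ toSet I) (hJ : t ∈ toSet J)
    (h : I.n ≤ J.n) : toSet J ⊆ toSet I := by
  obtain ⟨d, hd⟩ := Nat.exists_eq_add_of_le h
  have hfloor (u : ℝ) : ⌊2 ^ I.n * u⌋ = ⌊2 ^ J.n * u⌋ / (2 ^ d : ℕ) := by
    rw [← Int.floor_div_natCast, hd, pow_add]
    congr 1
    push_cast
    field_simp
  intro u hu
  rw [mem_toSet_iff_floor] at *
  rw [← hI, hfloor, hfloor, hu, hJ]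

lemma toSet_subset_or_subset {I J : DyadicI} {t : ℝ} (hI : t ∈ toSet I) (hJ : t ∈ toSet J) :
    toSet J ⊆ toSet I ∨ toSet I ⊆ toSet J :=
  (le_total I.n J.n).imp (toSet_subset_of_mem_of_n_le hI hJ) (toSet_subset_of_mem_of_n_le hJ hI)

lemma n_lt_of_toSet_ssubset {I J : DyadicI} (h : toSet J ⊂ toSet I) : I.n < J.n :=
  (n_le_of_toSet_subset h.subset).lt_of_not_ge fun hle =>
    h.not_subset <| toSet_subset_of_mem_of_n_le J.lep_mem_toSet_s16 (h.subset J.lep_mem_toSet_s16) hle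

lemma toSet_injective : Function.Injective toSet := by
  intro I J h
  have hn : I.n = J.n := (n_le_of_toSet_subset h.ge).antisymm (n_le_of_toSet_subset h.le)
  have hI := mem_toSet_iff_floor.1 I.lep_mem_toSet_s16
  have hJ := mem_toSet_iff_floor.1 (h ▸ I.lep_mem_toSet_s16)
  have hk : I.k = J.k := by rwa [← hn, hI, Nat.cast_inj] at hJ
  cases I
  cases J
  simp_all only

lemma haar_eq_one_or_neg_one {I : DyadicI} {t : ℝ} (ht : t ∈ toSet I) :
    haar I t = 1 ∨ haar I t = -1 := by
  by_cases h : t < I.lep + I.len / 2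
  · exact .inl (if_pos ⟨ht.1, h⟩)
  · exact .inr ((if_neg fun h' => h h'.2).trans (if_pos ⟨not_lt.1 h, ht.2⟩))

lemma haar_eq_zero_s16 {I : DyadicI} {t : ℝ} (ht : t ∉ toSet I) : haar I t = 0 := by
  have hlen := I.len_pos_s16
  refine (if_neg fun h => ht ⟨h.1, ?_⟩).trans (if_neg fun h => ht ⟨?_, h.2⟩)
  · linarith [h.2]
  · linarith [h.1]

end DyadicI

lemma carleson_le_of_sparse {E : Set DyadicI} {C : ℝ≥0} {U : DyadicI → Set ℝ}
    (hmeas : ∀ J ∈ E, MeasurableSet (U J)) (hsub : ∀ J ∈ E, U J ⊆ toSet J)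
    (hdisj : E.PairwiseDisjoint U) (hlen : ∀ J ∈ E, len J ≤ C * volume.real (U J)) :
    carleson E ≤ C := by
  refine iSup₂_le fun I _ => ENNReal.div_le_of_le_mul ?_
  have hlen' (J : {J // J ∈ E ∧ toSet J ⊆ toSet I}) :
      ENNReal.ofReal (len J) ≤ C * volume (U J) := by
    have hfin := measure_ne_top_of_subset (hsub J J.2.1) J.1.volume_toSet_ne_top
    rw [← ofReal_measureReal hfin, ← ENNReal.ofReal_coe_nnreal, ← ENNReal.ofReal_mul C.coe_nonneg]
    exact ENNReal.ofReal_le_ofReal (hlen J J.2.1)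
  calc ∑' J : {J // J ∈ E ∧ toSet J ⊆ toSet I}, ENNReal.ofReal (len J)
      ≤ ∑' J : {J // J ∈ E ∧ toSet J ⊆ toSet I}, C * volume (U J) := ENNReal.tsum_le_tsum hlen'
    _ = C * ∑' J : {J // J ∈ E ∧ toSet J ⊆ toSet I}, volume (U J) := ENNReal.tsum_mul_left
    _ ≤ C * volume (⋃ J : {J // J ∈ E ∧ toSet J ⊆ toSet I}, U J) := by
      gcongr
      exact tsum_meas_le_meas_iUnion_of_disjoint _ (fun J => hmeas J J.2.1)
        fun J K hJK => hdisj J.2.1 K.2.1 (Subtype.coe_ne_coe.2 hJK)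
    _ ≤ C * ENNReal.ofReal (len I) := by
      rw [← volume_toSet]
      gcongr
      exact iUnion_subset fun J => (hsub J J.2.1).trans J.2.2

lemma sqFn_eq_rademacherNorm {X : Type*} [NormedAddCommGroup X] [NormedSpace ℝ X]
    (s : Finset DyadicI) (x : DyadicI → X) (t : ℝ) :
    sqFn s x t = rademacherNorm x {I ∈ s | t ∈ toSet I} := by
  rw [rademacherNorm, ← rademacherMoment_mul_sign (fun _ => haar_eq_one_or_neg_one)
    (fun _ => haar_eq_zero_s16), sqFn, rademacherMoment]
  congr 2
  refine Finset.sum_bij' (fun ε _ => {I ∈ s | ∃ h : I ∈ s, ε ⟨I, h⟩ = true})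
    (fun T _ I => decide (I.1 ∈ T)) ?_ ?_ ?_ ?_ ?_
  · exact fun ε _ => Finset.mem_powerset.2 (Finset.filter_subset _ _)
  · exact fun T _ => Finset.mem_univ _
  · intro ε _
    funext I
    simp
  · intro T hT
    ext I
    simpa using fun hI => Finset.mem_powerset.1 hT hI
  · intro ε _
    rw [zero_add, ← Finset.sum_attach s]
    congr 2
    refine Finset.sum_congr rfl fun I _ => ?_
    cases hε : ε I <;> simp [hε]

section DyadicMedian

variable {Ω : Type*} [MeasurableSpace Ω]

/-- The least `m : ℤ` such that `S ≤ 2 ^ m` on at least half of `A`. It is used for `S` bounded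
above and bounded away from zero on `A`; otherwise there may be no least such `m` and `sInf`
returns the junk value `0`. -/
def dyadicMedian (μ : Measure Ω) (A : Set Ω) (S : Ω → ℝ) : ℤ :=
  sInf {m | μ.real (A ∩ {t | 2 ^ m < S t}) ≤ μ.real A / 2}

variable {μ : Measure Ω} {A : Set Ω} {S : Ω → ℝ} {c C : ℝ}

lemma le_two_zpow_of_measureReal_le_half (hA : 0 < μ.real A) (hc : ∀ t ∈ A, c ≤ S t) {m : ℤ}
    (hm : μ.real (A ∩ {t | 2 ^ m < S t}) ≤ μ.real A / 2) : c ≤ 2 ^ m := by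
  by_contra! h
  have hset : A ∩ {t | 2 ^ m < S t} = A := inter_eq_left.2 fun t ht => h.trans_le (hc t ht)
  rw [hset] at hm
  linarith

lemma bddBelow_measureReal_le_half (hA : 0 < μ.real A) (hc₀ : 0 < c) (hc : ∀ t ∈ A, c ≤ S t) :
    BddBelow {m : ℤ | μ.real (A ∩ {t | 2 ^ m < S t}) ≤ μ.real A / 2} := by
  obtain ⟨b, hb, -⟩ := exists_mem_Ico_zpow hc₀ (one_lt_two (α := ℝ))
  exact ⟨b, fun m hm => (zpow_le_zpow_iff_right₀ one_lt_two).1 <|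
    hb.trans (le_two_zpow_of_measureReal_le_half hA hc hm)⟩

lemma nonempty_measureReal_le_half (hC : ∀ t ∈ A, S t ≤ C) :
    {m : ℤ | μ.real (A ∩ {t | 2 ^ m < S t}) ≤ μ.real A / 2}.Nonempty := by
  obtain ⟨u, hu⟩ := pow_unbounded_of_one_lt C (one_lt_two (α := ℝ))
  have hempty : A ∩ {t | 2 ^ (u : ℤ) < S t} = ∅ :=
    eq_empty_of_forall_notMem fun t ht => (ht.2.trans_le (hC t ht.1)).not_ge (mod_cast hu.le)
  refine ⟨u, ?_⟩
  rw [mem_ofPred_eq, hempty, measureReal_empty]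
  positivity

lemma measureReal_dyadicMedian_lt_le_half (hA : 0 < μ.real A) (hc₀ : 0 < c)
    (hc : ∀ t ∈ A, c ≤ S t) (hC : ∀ t ∈ A, S t ≤ C) :
    μ.real (A ∩ {t | 2 ^ dyadicMedian μ A S < S t}) ≤ μ.real A / 2 :=
  Int.csInf_mem (nonempty_measureReal_le_half hC) (bddBelow_measureReal_le_half hA hc₀ hc)

lemma half_lt_measureReal_of_lt_dyadicMedian (hA : 0 < μ.real A) (hc₀ : 0 < c)
    (hc : ∀ t ∈ A, c ≤ S t) {m : ℤ} (hm : m < dyadicMedian μ A S) :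
    μ.real A / 2 < μ.real (A ∩ {t | 2 ^ m < S t}) := by
  have h := notMem_of_lt_csInf hm (bddBelow_measureReal_le_half hA hc₀ hc)
  rwa [mem_ofPred_eq, not_le] at h

lemma half_le_measureReal_le_dyadicMedian (hA : 0 < μ.real A) (hS : Measurable S) (hc₀ : 0 < c)
    (hc : ∀ t ∈ A, c ≤ S t) (hC : ∀ t ∈ A, S t ≤ C) :
    μ.real A / 2 ≤ μ.real (A ∩ {t | S t ≤ 2 ^ dyadicMedian μ A S}) := by
  have hfin : μ A ≠ ∞ := fun h => by simp [measureReal_def, h] at hA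
  have hsplit := measureReal_inter_add_sdiff
    (measurableSet_lt measurable_const hS : MeasurableSet {t | 2 ^ dyadicMedian μ A S < S t}) hfin
  have hcompl : A \ {t | 2 ^ dyadicMedian μ A S < S t} =
      A ∩ {t | S t ≤ 2 ^ dyadicMedian μ A S} := by
    ext t
    simp only [mem_sdiff, mem_inter_iff, mem_ofPred_eq, not_lt]
  rw [hcompl] at hsplit
  linarith [measureReal_dyadicMedian_lt_le_half hA hc₀ hc hC]

end DyadicMedian

section Integration

lemma sum_zpow_le_of_forall_le {K : Type*} [Field K] [LinearOrder K] [IsStrictOrderedRing K]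
    {b : K} (hb : 1 < b) {T : Finset ℤ} {m : ℤ} (hm : ∀ k ∈ T, k ≤ m) :
    ∑ k ∈ T, b ^ k ≤ b ^ m * (1 - b⁻¹)⁻¹ := by
  have hb₀ : 0 < b := one_pos.trans hb
  have hgap : 0 < 1 - b⁻¹ := sub_pos.2 (inv_lt_one_of_one_lt₀ hb)
  induction T using Finset.induction_on_max generalizing m with
  | empty => simpa using by positivity
  | insert a T hlt ih =>
    have hrest := ih (m := a - 1) fun k hk => Int.le_sub_one_of_lt (hlt k hk)
    rw [Finset.sum_insert fun ha => (hlt a ha).false]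
    calc b ^ a + ∑ k ∈ T, b ^ k ≤ b ^ a + b ^ (a - 1) * (1 - b⁻¹)⁻¹ := by gcongr
      _ = b ^ a * (1 - b⁻¹)⁻¹ := by
        rw [zpow_sub_one₀ hb₀.ne']
        field_simp
        ring
      _ ≤ b ^ m * (1 - b⁻¹)⁻¹ := by
        gcongr
        · exact hb.le
        · exact hm a (Finset.mem_insert_self a T)

lemma one_sub_rpow_neg_pos {b p : ℝ} (hb : 1 < b) (hp : 0 < p) : 0 < 1 - b ^ (-p) :=
  sub_pos.2 (Real.rpow_lt_one_of_one_lt_of_neg hb (neg_neg_of_pos hp))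

lemma sum_rpow_le_of_injOn {ι : Type*} {b p y : ℝ} (hb : 1 < b) (hp : 0 < p) (hy : 0 ≤ y)
    {T : Finset ι} {n : ι → ℤ} (hn : InjOn n T) (hny : ∀ i ∈ T, b ^ (n i - 1) ≤ y) :
    ∑ i ∈ T, b ^ (p * n i) ≤ b ^ p / (1 - b ^ (-p)) * y ^ p := by
  have hb₀ : 0 < b := one_pos.trans hb
  have hgap : 0 < 1 - b ^ (-p) := one_sub_rpow_neg_pos hb hp
  obtain rfl | hT := T.eq_empty_or_nonempty
  · rw [Finset.sum_empty]
    positivity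
  obtain ⟨i, hi, hmax⟩ := T.exists_max_image n hT
  have hbase : b ^ n i ≤ b * y := by
    have h := hny i hi
    rwa [zpow_sub_one₀ hb₀.ne', ← div_eq_mul_inv, div_le_iff₀' hb₀] at h
  calc ∑ i ∈ T, b ^ (p * n i) = ∑ k ∈ T.image n, (b ^ p) ^ k := by
        rw [Finset.sum_image hn]
        exact Finset.sum_congr rfl fun i _ => Real.rpow_mul_intCast hb₀.le p (n i)
    _ ≤ (b ^ p) ^ n i * (1 - (b ^ p)⁻¹)⁻¹ :=
        sum_zpow_le_of_forall_le (Real.one_lt_rpow hb hp) (Finset.forall_mem_image.2 hmax)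
    _ = (b ^ n i) ^ p * (1 - b ^ (-p))⁻¹ := by
        rw [← Real.rpow_mul_intCast hb₀.le, mul_comm p (n i : ℝ), Real.rpow_intCast_mul hb₀.le,
          Real.rpow_neg hb₀.le, mul_comm]
    _ ≤ (b * y) ^ p * (1 - b ^ (-p))⁻¹ := by gcongr
    _ = b ^ p / (1 - b ^ (-p)) * y ^ p := by
        rw [Real.mul_rpow hb₀.le hy, div_eq_mul_inv, mul_right_comm]

variable {Ω ι : Type*} [MeasurableSpace Ω] {μ : Measure Ω} {E : Finset ι} {A : ι → Set Ω}

lemma integrable_sum_indicator_const (hA : ∀ i, MeasurableSet (A i)) (hfin : ∀ i, μ (A i) ≠ ∞)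
    (c : ι → ℝ) : Integrable (fun t => ∑ i ∈ E, (A i).indicator (fun _ => c i) t) μ :=
  integrable_finsetSum _ fun i _ => (integrableOn_const (hfin i)).integrable_indicator (hA i)

lemma integral_sum_indicator_const (hA : ∀ i, MeasurableSet (A i)) (hfin : ∀ i, μ (A i) ≠ ∞)
    (c : ι → ℝ) :
    ∫ t, ∑ i ∈ E, (A i).indicator (fun _ => c i) t ∂μ = ∑ i ∈ E, μ.real (A i) * c i := by
  rw [integral_finsetSum _ fun i _ => (integrableOn_const (hfin i)).integrable_indicator (hA i)]
  exact Finset.sum_congr rfl fun i _ => integral_indicator_const (c i) (hA i)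

end Integration

section PrincipalIntervals

variable {β : Type*} [LinearOrder β] {s E : Finset DyadicI} {I J : DyadicI}

/-- The stopping-time condition that selects principal intervals: the value `a J` exceeds the
threshold `τ K` of every principal interval `K ∈ s` strictly above `J`. The definition recurses on
the generation of `J`, from coarse intervals to fine ones. -/
def IsPrincipal (s : Finset DyadicI) (τ a : DyadicI → β) (J : DyadicI) : Prop :=
  ∀ K ∈ s, (hJK : toSet J ⊂ toSet K) → IsPrincipal s τ a K → τ K < a J
termination_by J.n
decreasing_by exact n_lt_of_toSet_ssubset hJK

/-- The principal intervals of `s` for thresholds `τ` and values `a`. -/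
def principal (s : Finset DyadicI) (τ a : DyadicI → β) : Finset DyadicI :=
  s.filter (IsPrincipal s τ a)

/-- The part of `s` governed by `I ∈ E`: the intervals `J ∈ s` for which `I` is the smallest
interval of `E` containing `J`. -/
def block (s E : Finset DyadicI) (I : DyadicI) : Finset DyadicI :=
  {J ∈ s | toSet J ⊆ toSet I ∧ ∀ K ∈ E, toSet J ⊆ toSet K → toSet I ⊆ toSet K}

lemma mem_block : J ∈ block s E I ↔
    J ∈ s ∧ toSet J ⊆ toSet I ∧ ∀ K ∈ E, toSet J ⊆ toSet K → toSet I ⊆ toSet K :=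
  Finset.mem_filter

lemma isBlock_block (hI : I ∈ s) : IsBlock s (block s E I) I := by
  refine ⟨fun J hJ => (mem_block.1 hJ).1, mem_block.2 ⟨hI, Subset.rfl, fun _ _ h => h⟩,
    fun J hJ => (mem_block.1 hJ).2.1, fun J hJ K hK hJK hKI => ?_⟩
  exact mem_block.2 ⟨hK, hKI, fun L hL hKL => (mem_block.1 hJ).2.2 L hL (hJK.trans hKL)⟩

lemma disjoint_block (hI : I ∈ E) (hJ : J ∈ E) (hIJ : I ≠ J) :
    Disjoint (block s E I) (block s E J) := by
  refine Finset.disjoint_left.2 fun K hKI hKJ => hIJ <| toSet_injective ?_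
  obtain ⟨-, hKI, hI_min⟩ := mem_block.1 hKI
  obtain ⟨-, hKJ, hJ_min⟩ := mem_block.1 hKJ
  exact (hI_min J hJ hKJ).antisymm (hJ_min I hI hKI)

lemma exists_mem_block (hJ : J ∈ s) (hE : ∃ K ∈ E, toSet J ⊆ toSet K) :
    ∃ I ∈ E, J ∈ block s E I := by
  obtain ⟨K, hK, hJK⟩ := hE
  obtain ⟨I, hI, hmax⟩ := Finset.exists_max_image {K ∈ E | toSet J ⊆ toSet K} DyadicI.n
    ⟨K, Finset.mem_filter.2 ⟨hK, hJK⟩⟩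
  obtain ⟨hI, hJI⟩ := Finset.mem_filter.1 hI
  exact ⟨I, hI, mem_block.2 ⟨hJ, hJI, fun L hL hJL => toSet_subset_of_mem_of_n_le
    (hJL J.lep_mem_toSet_s16) (hJI J.lep_mem_toSet_s16) (hmax L (Finset.mem_filter.2 ⟨hL, hJL⟩))⟩⟩

variable {τ a : DyadicI → β}

lemma mem_principal : J ∈ principal s τ a ↔
    J ∈ s ∧ ∀ K ∈ principal s τ a, toSet J ⊂ toSet K → τ K < a J := by
  rw [principal, Finset.mem_filter, IsPrincipal]
  simp only [Finset.mem_filter, and_imp]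
  exact and_congr_right fun _ => forall₂_congr fun K _ => forall_comm

lemma threshold_lt_of_ssubset (hJ : J ∈ principal s τ a) (hI : I ∈ principal s τ a)
    (hJI : toSet J ⊂ toSet I) : τ I < a J :=
  (mem_principal.1 hJ).2 I hI hJI

lemma exists_threshold_ge_of_notMem_principal (hJ : J ∈ s) (hJ' : J ∉ principal s τ a) :
    ∃ K ∈ principal s τ a, toSet J ⊂ toSet K ∧ a J ≤ τ K := by
  by_contra! h
  exact hJ' (mem_principal.2 ⟨hJ, h⟩)

lemma exists_mem_block_principal (hJ : J ∈ s) :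
    ∃ I ∈ principal s τ a, J ∈ block s (principal s τ a) I := by
  refine exists_mem_block hJ ?_
  by_cases hJ' : J ∈ principal s τ a
  · exact ⟨J, hJ', Subset.rfl⟩
  · obtain ⟨K, hK, hJK, -⟩ := exists_threshold_ge_of_notMem_principal hJ hJ'
    exact ⟨K, hK, hJK.subset⟩

lemma value_le_of_mem_block (ha : ∀ J ∈ s, a J ≤ τ J) (hI : I ∈ principal s τ a)
    (hJ : J ∈ block s (principal s τ a) I) : a J ≤ τ I := by
  obtain ⟨hJs, hJI, hI_min⟩ := mem_block.1 hJ
  by_cases hJ' : J ∈ principal s τ a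
  · obtain rfl : J = I := toSet_injective (hJI.antisymm (hI_min J hJ' Subset.rfl))
    exact ha J hJs
  obtain ⟨K, hK, hJK, hle⟩ := exists_threshold_ge_of_notMem_principal hJs hJ'
  obtain heq | hIK := (hI_min K hK hJK.subset).eq_or_ssubset
  · exact toSet_injective heq ▸ hle
  · exact (hle.trans_lt (threshold_lt_of_ssubset hI hK hIK)).le.trans (ha I (mem_principal.1 hI).1)

end PrincipalIntervals

section TowerFunctions

/-- The function whose value at `t` is `g` of the tower of intervals of `s` that contain `t`. For
`g = rademacherNorm x` this is the square function `𝕊(f)`. -/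
def towerFn (g : Finset DyadicI → ℝ) (s : Finset DyadicI) (t : ℝ) : ℝ := g {I ∈ s | t ∈ toSet I}

/-- The value of `g` on the tower of intervals of `s` that contain `J`; for monotone `g` it is a
lower bound for `towerFn g s` on `J`. -/
def towerValue (g : Finset DyadicI → ℝ) (s : Finset DyadicI) (J : DyadicI) : ℝ :=
  g {I ∈ s | toSet J ⊆ toSet I}

/-- The dyadic exponent of a median of `towerFn g s` over `I`. -/
def medianLevel (g : Finset DyadicI → ℝ) (s : Finset DyadicI) (I : DyadicI) : ℤ :=
  dyadicMedian volume (toSet I) (towerFn g s)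

/-- The intervals of `s` at which `towerValue g s` exceeds the median levels of all the previously
selected intervals above. -/
def principalMedian (g : Finset DyadicI → ℝ) (s : Finset DyadicI) : Finset DyadicI :=
  principal s (fun I => (2 : ℝ) ^ medianLevel g s I) (towerValue g s)

variable {g : Finset DyadicI → ℝ} {s A : Finset DyadicI} {I J : DyadicI} {t p : ℝ}

lemma measurable_towerFn (g : Finset DyadicI → ℝ) (s : Finset DyadicI) :
    Measurable (towerFn g s) := by
  induction s using Finset.induction_on generalizing g with
  | empty => exact (measurable_const : Measurable fun _ : ℝ => g ∅)
  | insert a s _ ih =>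
    have hsplit : towerFn g (insert a s) = fun t =>
        if t ∈ toSet a then towerFn (fun A => g (insert a A)) s t else towerFn g s t := by
      funext t
      rw [towerFn, Finset.filter_insert, apply_ite g]
      rfl
    rw [hsplit]
    exact (ih _).ite a.measurableSet_toSet_s16 (ih g)

lemma towerFn_eq_zero (hg₀ : g ∅ = 0) (ht : t ∉ Icc (0 : ℝ) 1) : towerFn g s t = 0 := by
  rw [towerFn, Finset.filter_false_of_mem fun I _ hI => ht (I.toSet_subset_Icc_s16 hI), hg₀]

lemma towerFn_nonneg (hg : Monotone g) (hg₀ : g ∅ = 0) : 0 ≤ towerFn g s t :=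
  hg₀.ge.trans (hg (Finset.empty_subset _))

lemma towerFn_le (hg : Monotone g) : towerFn g s t ≤ g s := hg (Finset.filter_subset _ _)

lemma singleton_le_towerFn (hg : Monotone g) (hI : I ∈ s) (ht : t ∈ toSet I) :
    g {I} ≤ towerFn g s t :=
  hg (Finset.singleton_subset_iff.2 (Finset.mem_filter.2 ⟨hI, ht⟩))

lemma towerValue_le_towerFn (hg : Monotone g) (ht : t ∈ toSet J) :
    towerValue g s J ≤ towerFn g s t :=
  hg (Finset.monotone_filter_right s fun _ _ hJI => hJI ht)

lemma towerFn_eq_zero_or_le_towerValue (hg : Monotone g) (hg₀ : g ∅ = 0) (hA : A ⊆ s) (t : ℝ) :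
    towerFn g A t = 0 ∨ ∃ J ∈ A, t ∈ toSet J ∧ towerFn g A t ≤ towerValue g s J := by
  obtain hempty | hne := {I ∈ A | t ∈ toSet I}.eq_empty_or_nonempty
  · left
    rw [towerFn, hempty, hg₀]
  · obtain ⟨J, hJ, hmax⟩ := Finset.exists_max_image _ DyadicI.n hne
    obtain ⟨hJA, htJ⟩ := Finset.mem_filter.1 hJ
    refine .inr ⟨J, hJA, htJ, hg fun K hK => ?_⟩
    obtain ⟨hKA, htK⟩ := Finset.mem_filter.1 hK
    exact Finset.mem_filter.2 ⟨hA hKA, toSet_subset_of_mem_of_n_le htK htJ (hmax K hK)⟩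

lemma integrable_towerFn_rpow (hg : Monotone g) (hg₀ : g ∅ = 0) (hp : 0 < p) :
    Integrable fun t => towerFn g s t ^ p := by
  have hsupp : (Function.support fun t => towerFn g s t ^ p) ⊆ Icc 0 1 := by
    refine Function.support_subset_iff'.2 fun t ht => ?_
    rw [towerFn_eq_zero hg₀ ht, Real.zero_rpow hp.ne']
  refine (integrableOn_iff_integrable_of_support_subset hsupp).1 <|
    Measure.integrableOn_of_bounded (M := g s ^ p) measure_Icc_lt_top.ne
      ((measurable_towerFn g s).pow_const p).aestronglyMeasurable (ae_of_all _ fun t => ?_)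
  have hnonneg : 0 ≤ towerFn g s t := towerFn_nonneg hg hg₀
  rw [Real.norm_of_nonneg (by positivity)]
  gcongr
  exact towerFn_le hg

lemma towerValue_le_two_zpow_medianLevel (hg : Monotone g) (hI : I ∈ s) (hI₀ : 0 < g {I}) :
    towerValue g s I ≤ 2 ^ medianLevel g s I := by
  have hvol : 0 < volume.real (toSet I) := I.volume_real_toSet ▸ I.len_pos_s16
  exact le_two_zpow_of_measureReal_le_half hvol (fun t ht => towerValue_le_towerFn hg ht) <|
    measureReal_dyadicMedian_lt_le_half hvol hI₀ (fun t ht => singleton_le_towerFn hg hI ht)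
      fun t _ => towerFn_le hg

lemma len_le_two_mul_volume_towerFn_le (hg : Monotone g) (hI : I ∈ s) (hI₀ : 0 < g {I}) :
    len I ≤ 2 * volume.real (toSet I ∩ {t | towerFn g s t ≤ 2 ^ medianLevel g s I}) := by
  have hvol : 0 < volume.real (toSet I) := I.volume_real_toSet ▸ I.len_pos_s16
  have h := half_le_measureReal_le_dyadicMedian hvol (measurable_towerFn g s) hI₀
    (fun t ht => singleton_le_towerFn hg hI ht) fun t _ => towerFn_le hg
  rw [volume_real_toSet, ← medianLevel] at h
  linarith

lemma len_le_two_mul_volume_lt_towerFn (hg : Monotone g) (hI : I ∈ s) (hI₀ : 0 < g {I}) :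
    len I ≤ 2 * volume.real (toSet I ∩ {t | 2 ^ (medianLevel g s I - 1) < towerFn g s t}) := by
  have hvol : 0 < volume.real (toSet I) := I.volume_real_toSet ▸ I.len_pos_s16
  have h := half_lt_measureReal_of_lt_dyadicMedian hvol hI₀
    (fun t ht => singleton_le_towerFn hg hI ht) (sub_one_lt (medianLevel g s I))
  rw [volume_real_toSet] at h
  linarith

lemma principalMedian_subset : principalMedian g s ⊆ s := Finset.filter_subset _ _

lemma two_zpow_medianLevel_lt_towerValue (hJ : J ∈ principalMedian g s)
    (hI : I ∈ principalMedian g s) (hJI : toSet J ⊂ toSet I) :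
    2 ^ medianLevel g s I < towerValue g s J :=
  threshold_lt_of_ssubset hJ hI hJI

lemma disjoint_towerFn_le_of_ssubset (hg : Monotone g) (hJ : J ∈ principalMedian g s)
    (hI : I ∈ principalMedian g s) (hJI : toSet J ⊂ toSet I) :
    Disjoint (toSet J) {t | towerFn g s t ≤ 2 ^ medianLevel g s I} :=
  disjoint_left.2 fun _ ht hle =>
    (two_zpow_medianLevel_lt_towerValue hJ hI hJI).not_ge ((towerValue_le_towerFn hg ht).trans hle)

lemma pairwiseDisjoint_towerFn_le (hg : Monotone g) :
    (principalMedian g s : Set DyadicI).PairwiseDisjoint fun I =>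
      toSet I ∩ {t | towerFn g s t ≤ 2 ^ medianLevel g s I} := by
  intro I hI J hJ hIJ
  refine disjoint_left.2 fun t htI htJ => ?_
  obtain hsub | hsub := toSet_subset_or_subset htI.1 htJ.1
  · have hss := hsub.ssubset_of_ne (toSet_injective.ne hIJ.symm)
    exact disjoint_left.1 (disjoint_towerFn_le_of_ssubset hg hJ hI hss) htJ.1 htI.2
  · have hss := hsub.ssubset_of_ne (toSet_injective.ne hIJ)
    exact disjoint_left.1 (disjoint_towerFn_le_of_ssubset hg hI hJ hss) htI.1 htJ.2

lemma towerFn_block_le (hg : Monotone g) (hg₀ : g ∅ = 0) (hpos : ∀ I ∈ s, 0 < g {I})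
    (hI : I ∈ principalMedian g s) (t : ℝ) :
    towerFn g (block s (principalMedian g s) I) t ≤ 2 ^ medianLevel g s I := by
  obtain hzero | ⟨J, hJ, -, hle⟩ :=
    towerFn_eq_zero_or_le_towerValue hg hg₀ (fun _ hJ => (mem_block.1 hJ).1) t
  · rw [hzero]
    positivity
  · exact hle.trans <| value_le_of_mem_block
      (fun J hJ => towerValue_le_two_zpow_medianLevel hg hJ (hpos J hJ)) hI hJ

lemma carleson_principalMedian_le (hg : Monotone g) (hpos : ∀ I ∈ s, 0 < g {I}) :
    carleson (principalMedian g s) ≤ 2 := by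
  refine carleson_le_of_sparse (C := 2)
    (fun I _ => I.measurableSet_toSet_s16.inter (measurableSet_le (measurable_towerFn g s)
      measurable_const)) (fun I _ => inter_subset_left) (pairwiseDisjoint_towerFn_le hg)
    fun I hI => ?_
  have hIs : I ∈ s := principalMedian_subset hI
  exact len_le_two_mul_volume_towerFn_le hg hIs (hpos I hIs)

lemma towerFn_rpow_le_sum_indicator (hg : Monotone g) (hg₀ : g ∅ = 0)
    (hpos : ∀ I ∈ s, 0 < g {I}) (hp : 0 < p) (t : ℝ) :
    towerFn g s t ^ p ≤ ∑ I ∈ principalMedian g s,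
      (toSet I).indicator (fun _ => (2 : ℝ) ^ (p * medianLevel g s I)) t := by
  have hterm (I : DyadicI) :
      0 ≤ (toSet I).indicator (fun _ => (2 : ℝ) ^ (p * medianLevel g s I)) t :=
    indicator_nonneg (fun _ _ => by positivity) t
  obtain hzero | ⟨J, hJ, ht, hle⟩ := towerFn_eq_zero_or_le_towerValue hg hg₀ Subset.rfl t
  · rw [hzero, Real.zero_rpow hp.ne']
    exact Finset.sum_nonneg fun I _ => hterm I
  obtain ⟨I, hI, hJI⟩ : ∃ I ∈ principalMedian g s, J ∈ block s (principalMedian g s) I :=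
    exists_mem_block_principal hJ
  have hle : towerFn g s t ≤ 2 ^ medianLevel g s I := hle.trans <| value_le_of_mem_block
    (fun J hJ => towerValue_le_two_zpow_medianLevel hg hJ (hpos J hJ)) hI hJI
  have hnonneg : 0 ≤ towerFn g s t := towerFn_nonneg hg hg₀
  calc towerFn g s t ^ p ≤ ((2 : ℝ) ^ medianLevel g s I) ^ p := by gcongr
    _ = (toSet I).indicator (fun _ => (2 : ℝ) ^ (p * medianLevel g s I)) t := by
      rw [indicator_of_mem ((mem_block.1 hJI).2.1 ht), mul_comm, Real.rpow_intCast_mul two_pos.le]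
    _ ≤ _ := Finset.single_le_sum (fun I _ => hterm I) hI

lemma integral_towerFn_rpow_le (hg : Monotone g) (hg₀ : g ∅ = 0) (hpos : ∀ I ∈ s, 0 < g {I})
    (hp : 0 < p) :
    ∫ t, towerFn g s t ^ p ≤
      ∑ I ∈ principalMedian g s, len I * (2 : ℝ) ^ (p * medianLevel g s I) := by
  calc ∫ t, towerFn g s t ^ p
      ≤ ∫ t, ∑ I ∈ principalMedian g s,
          (toSet I).indicator (fun _ => (2 : ℝ) ^ (p * medianLevel g s I)) t :=
        integral_mono (integrable_towerFn_rpow hg hg₀ hp)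
          (integrable_sum_indicator_const measurableSet_toSet_s16 volume_toSet_ne_top _)
          (towerFn_rpow_le_sum_indicator hg hg₀ hpos hp)
    _ = ∑ I ∈ principalMedian g s, len I * (2 : ℝ) ^ (p * medianLevel g s I) := by
        rw [integral_sum_indicator_const measurableSet_toSet_s16 volume_toSet_ne_top]
        simp only [volume_real_toSet]

lemma medianLevel_lt_of_ssubset (hg : Monotone g) (hpos : ∀ I ∈ s, 0 < g {I})
    (hJ : J ∈ principalMedian g s) (hI : I ∈ principalMedian g s) (hJI : toSet J ⊂ toSet I) :
    medianLevel g s I < medianLevel g s J := by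
  have hJs : J ∈ s := principalMedian_subset hJ
  exact (zpow_lt_zpow_iff_right₀ one_lt_two).1 <|
    (two_zpow_medianLevel_lt_towerValue hJ hI hJI).trans_le
      (towerValue_le_two_zpow_medianLevel hg hJs (hpos J hJs))

lemma injOn_medianLevel (hg : Monotone g) (hpos : ∀ I ∈ s, 0 < g {I}) (t : ℝ) :
    InjOn (medianLevel g s) {I | I ∈ principalMedian g s ∧ t ∈ toSet I} := by
  rintro I ⟨hI, htI⟩ J ⟨hJ, htJ⟩ heq
  by_contra hIJ
  obtain hsub | hsub := toSet_subset_or_subset htI htJ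
  · have hss := hsub.ssubset_of_ne (toSet_injective.ne (Ne.symm hIJ))
    exact (medianLevel_lt_of_ssubset hg hpos hJ hI hss).ne heq
  · have hss := hsub.ssubset_of_ne (toSet_injective.ne hIJ)
    exact (medianLevel_lt_of_ssubset hg hpos hI hJ hss).ne heq.symm

lemma sum_indicator_le_towerFn_rpow (hg : Monotone g) (hg₀ : g ∅ = 0)
    (hpos : ∀ I ∈ s, 0 < g {I}) (hp : 0 < p) (t : ℝ) :
    ∑ I ∈ principalMedian g s,
      (toSet I ∩ {t | 2 ^ (medianLevel g s I - 1) < towerFn g s t}).indicator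
        (fun _ => (2 : ℝ) ^ (p * medianLevel g s I)) t ≤
      2 ^ p / (1 - 2 ^ (-p)) * towerFn g s t ^ p := by
  simp only [indicator_apply]
  rw [← Finset.sum_filter]
  refine sum_rpow_le_of_injOn one_lt_two hp (towerFn_nonneg hg hg₀)
    ((injOn_medianLevel hg hpos t).mono fun I hI => ?_) fun I hI => ?_
  · exact ⟨(Finset.mem_filter.1 hI).1, (Finset.mem_filter.1 hI).2.1⟩
  · exact (Finset.mem_filter.1 hI).2.2.le

lemma sum_len_mul_rpow_le_integral (hg : Monotone g) (hg₀ : g ∅ = 0)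
    (hpos : ∀ I ∈ s, 0 < g {I}) (hp : 0 < p) :
    ∑ I ∈ principalMedian g s, len I * (2 : ℝ) ^ (p * medianLevel g s I) ≤
      2 * (2 ^ p / (1 - 2 ^ (-p))) * ∫ t, towerFn g s t ^ p := by
  set F : DyadicI → Set ℝ := fun I =>
    toSet I ∩ {t | 2 ^ (medianLevel g s I - 1) < towerFn g s t}
  have hFmeas (I : DyadicI) : MeasurableSet (F I) :=
    I.measurableSet_toSet_s16.inter (measurableSet_lt measurable_const (measurable_towerFn g s))
  have hFfin (I : DyadicI) : volume (F I) ≠ ∞ :=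
    measure_ne_top_of_subset inter_subset_left I.volume_toSet_ne_top
  calc ∑ I ∈ principalMedian g s, len I * (2 : ℝ) ^ (p * medianLevel g s I)
      ≤ ∑ I ∈ principalMedian g s,
          2 * volume.real (F I) * (2 : ℝ) ^ (p * medianLevel g s I) := by
        gcongr with I hI
        exact len_le_two_mul_volume_lt_towerFn hg (principalMedian_subset hI)
          (hpos I (principalMedian_subset hI))
    _ = 2 * ∫ t, ∑ I ∈ principalMedian g s,
          (F I).indicator (fun _ => (2 : ℝ) ^ (p * medianLevel g s I)) t := by
        rw [integral_sum_indicator_const hFmeas hFfin, Finset.mul_sum]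
        simp only [mul_assoc]
    _ ≤ 2 * ∫ t, 2 ^ p / (1 - 2 ^ (-p)) * towerFn g s t ^ p := by
        gcongr 2 * ?_
        exact integral_mono (integrable_sum_indicator_const hFmeas hFfin _)
          ((integrable_towerFn_rpow hg hg₀ hp).const_mul _)
          (sum_indicator_le_towerFn_rpow hg hg₀ hpos hp)
    _ = 2 * (2 ^ p / (1 - 2 ^ (-p))) * ∫ t, towerFn g s t ^ p := by
        rw [integral_const_mul, mul_assoc]

end TowerFunctions

section HardySpace

variable {X : Type*} [NormedAddCommGroup X] [NormedSpace ℝ X]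

lemma sqFn_eq_towerFn (s : Finset DyadicI) (x : DyadicI → X) :
    sqFn s x = towerFn (rademacherNorm x) s :=
  funext (sqFn_eq_rademacherNorm s x)

lemma hpNormV_rpow_eq_integral {p : ℝ} (hp : 0 < p) (s : Finset DyadicI) (x : DyadicI → X) :
    HpNormV p s x ^ p = ∫ t, towerFn (rademacherNorm x) s t ^ p := by
  have hnonneg : 0 ≤ ∫ t in Icc (0 : ℝ) 1, sqFn s x t ^ p :=
    integral_nonneg fun t => Real.rpow_nonneg (Real.sqrt_nonneg _) p
  rw [HpNormV, one_div, Real.rpow_inv_rpow hnonneg hp.ne', sqFn_eq_towerFn]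
  refine setIntegral_eq_integral_of_forall_compl_eq_zero fun t ht => ?_
  rw [towerFn_eq_zero (rademacherNorm_empty x) ht, Real.zero_rpow hp.ne']

end HardySpace

theorem statement16_general {p : ℝ} (hp : 0 < p) {X : Type*} [NormedAddCommGroup X]
    [NormedSpace ℝ X] (s : Finset DyadicI) (x : DyadicI → X) (hx : ∀ I ∈ s, x I ≠ 0) :
    ∃ (E : Finset DyadicI) (B : DyadicI → Finset DyadicI) (n : DyadicI → ℤ),
      (∀ I ∈ E, IsBlock (↑s) (↑(B I)) I) ∧
      (∀ I ∈ E, ∀ I' ∈ E, I ≠ I' → Disjoint (B I) (B I')) ∧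
      (∀ J, J ∈ s ↔ ∃ I ∈ E, J ∈ B I) ∧
      carleson (↑E) ≤ 2 ∧
      (∀ I ∈ E, ∀ t : ℝ, sqFn (B I) x t ≤ (2 : ℝ) ^ (n I)) ∧
      HpNormV p s x ^ p ≤ (∑ I ∈ E, DyadicI.len I * (2 : ℝ) ^ (p * (n I : ℝ))) ∧
      (∑ I ∈ E, DyadicI.len I * (2 : ℝ) ^ (p * (n I : ℝ))) ≤
        2 * (2 ^ p / (1 - 2 ^ (-p))) * HpNormV p s x ^ p := by
  have hmono : Monotone (rademacherNorm x) := rademacherNorm_monotone x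
  have hempty : rademacherNorm x ∅ = 0 := rademacherNorm_empty x
  have hpos : ∀ I ∈ s, 0 < rademacherNorm x {I} := fun I hI => by
    rw [rademacherNorm_singleton]
    exact norm_pos_iff.2 (hx I hI)
  rw [hpNormV_rpow_eq_integral hp]
  simp only [sqFn_eq_towerFn]
  exact ⟨principalMedian (rademacherNorm x) s, block s (principalMedian (rademacherNorm x) s),
    medianLevel (rademacherNorm x) s, fun I hI => isBlock_block (principalMedian_subset hI),
    fun I hI J hJ => disjoint_block hI hJ,
    fun J => ⟨exists_mem_block_principal, fun ⟨I, _, hJ⟩ => (mem_block.1 hJ).1⟩,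
    carleson_principalMedian_le hmono hpos,
    fun I hI => towerFn_block_le hmono hempty hpos hI,
    integral_towerFn_rpow_le hmono hempty hpos hp,
    sum_len_mul_rpow_le_integral hmono hempty hpos hp⟩

/-- Let `0 < p < ∞` and `X` a Banach space. There are constants
`c_p, A_p > 0` depending only on `p` such that every finitely supported `X`-valued
Haar expansion `f = ∑_J x_J h_J` (with Haar support `s`) admits a collection
`E ⊆ D`, a partition of `s` into blocks `{B(I) : I ∈ E}` with tops in `E`, and
integers `n(I) ∈ ℤ`, with: (i) `⟦E⟧ ≤ 4`; (ii) `𝕊(f_I) ≤ 2^{n(I)}` everywhere,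
where `f_I = ∑_{J ∈ B(I)} x_J h_J`; (iii)
`c_p ‖f‖_{H^p_X}^p ≤ ∑_{I ∈ E} |I| 2^{p n(I)} ≤ A_p ‖f‖_{H^p_X}^p`. -/
theorem statement16 (p : ℝ) (hp : 0 < p) :
    ∃ c A : ℝ, 0 < c ∧ 0 < A ∧
      ∀ (X : Type*) [NormedAddCommGroup X] [NormedSpace ℝ X] [CompleteSpace X]
        (s : Finset DyadicI) (x : DyadicI → X), (∀ I, x I ≠ 0 ↔ I ∈ s) →
        ∃ (E : Finset DyadicI) (B : DyadicI → Finset DyadicI) (n : DyadicI → ℤ),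
          (∀ I ∈ E, IsBlock (↑s) (↑(B I)) I) ∧
          (∀ I ∈ E, ∀ I' ∈ E, I ≠ I' → Disjoint (B I) (B I')) ∧
          (∀ J, J ∈ s ↔ ∃ I ∈ E, J ∈ B I) ∧
          carleson (↑E) ≤ 4 ∧
          (∀ I ∈ E, ∀ t : ℝ, sqFn (B I) x t ≤ (2 : ℝ) ^ (n I)) ∧
          c * HpNormV p s x ^ p ≤ (∑ I ∈ E, DyadicI.len I * (2 : ℝ) ^ (p * (n I : ℝ))) ∧
          (∑ I ∈ E, DyadicI.len I * (2 : ℝ) ^ (p * (n I : ℝ))) ≤ A * HpNormV p s x ^ p := by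
  have hgap : 0 < 1 - (2 : ℝ) ^ (-p) := one_sub_rpow_neg_pos one_lt_two hp
  refine ⟨1, 2 * (2 ^ p / (1 - 2 ^ (-p))), one_pos, by positivity, fun X _ _ _ s x hx => ?_⟩
  obtain ⟨E, B, n, hblock, hdisj, hcover, hE, hS, hlower, hupper⟩ :=
    statement16_general hp s x fun I => (hx I).2
  exact ⟨E, B, n, hblock, hdisj, hcover, hE.trans (by norm_num), hS, by rwa [one_mul], hupper⟩
end
end
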